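/- arXiv:1312.6563 — 7 statements merged into one kernel-verified Lean document; each statement's English description precedes it below -/
import Mathlib

section
/- Let X be a Polish ultrametric space, let Y, Y' ⊆ X be finite sets, and let f : Y → Y' be an isometric bijection such that ⟦y⟧ = ⟦f(y)⟧ for every y ∈ Y. Then f extends to an isometry of X; that is, there exists g ∈ Iso(X) with g(y) = f(y) for all y ∈ Y. -/
/-!
Induction on the finite set `Y`. Suppose `g` already agrees with `f` on `s` and a new point `a`
is added. After composing with `g⁻¹`, the points of `s` are to be fixed while `a` is sent to a
point `b` of its orbit, with `dist y a = dist y b` for all `y ∈ s`; hence every `y ∈ s` is at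
distance at least `r = dist a b` from both `a` and `b`. Pick an isometry `h` with `h a = b`.
The map equal to `h` on `ball a r`, to `h⁻¹` on `ball b r` and to the identity elsewhere is an
involutive isometry (`exists_isometryEquiv_swap`): the two balls are disjoint, points of
different balls are at distance exactly `r`, and a point outside both is equidistant from
all points of both balls.
-/

open Metric Set Topology

namespace UltraGen

variable {X : Type*} [MetricSpace X]

/-- `B` is a ball of radius `r` (i.e. `B = ball x r` for some center, with `r > 0`). -/
def IsBallRad (B : Set X) (r : ℝ) : Prop := 0 < r ∧ ∃ x : X, B = Metric.ball x r

/-- `B` is a ball in `X`. -/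
def IsBall (B : Set X) : Prop := ∃ r, IsBallRad B r

/-- An FD family: a finite family of pairwise disjoint balls. -/
def FDFamily (𝓑 : Set (Set X)) : Prop :=
  𝓑.Finite ∧ (∀ B ∈ 𝓑, IsBall B) ∧ 𝓑.Pairwise fun B B' => Disjoint B B'

/-- τ(g,𝓑) = {g' ∈ Iso(X) : g'[B] = g[B] for all B ∈ 𝓑}. -/
def tau (g : X ≃ᵢ X) (𝓑 : Set (Set X)) : Set (X ≃ᵢ X) :=
  {g' | ∀ B ∈ 𝓑, g' '' B = g '' B}

/-- 𝓑' strengthens 𝓑 iff τ(Id,𝓑') ⊆ τ(Id,𝓑). -/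
def Strengthens (𝓑' 𝓑 : Set (Set X)) : Prop :=
  tau (1 : X ≃ᵢ X) 𝓑' ⊆ tau (1 : X ≃ᵢ X) 𝓑

/-- 𝒪^𝓑(C) = {g[C] : g ∈ τ(Id,𝓑)}. -/
def orb (𝓑 : Set (Set X)) (C : Set X) : Set (Set X) :=
  (fun g : X ≃ᵢ X => g '' C) '' tau (1 : X ≃ᵢ X) 𝓑

/-- A ball `C` is 𝓑-extremal in `X` if 𝒪^𝓑(C) is infinite or a singleton. -/
def Extremal (𝓑 : Set (Set X)) (C : Set X) : Prop :=
  (orb 𝓑 C).Infinite ∨ ∃ D, orb 𝓑 C = {D}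

/-- `X` has the 𝓑-extremality property if every ball in `X` is 𝓑-extremal in `X`. -/
def ExtremalityProperty (X : Type*) [MetricSpace X] (𝓑 : Set (Set X)) : Prop :=
  ∀ C : Set X, IsBall C → Extremal 𝓑 C

/-- `C` is a ball of radius `r` which is r-maximal 𝓑-non-extremal in `X`:
`C` is 𝓑-non-extremal and every ball of radius `r' > r` containing `C` is 𝓑-extremal. -/
def RMaxNonExtremalRad (𝓑 : Set (Set X)) (C : Set X) (r : ℝ) : Prop :=
  IsBallRad C r ∧ ¬ Extremal 𝓑 C ∧
  ∀ (C' : Set X) (r' : ℝ), r < r' → IsBallRad C' r' → C ⊆ C' → Extremal 𝓑 C'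

/-- `C` is r-maximal 𝓑-non-extremal in `X` (for some radius of `C`). -/
def RMaxNonExtremal (𝓑 : Set (Set X)) (C : Set X) : Prop :=
  ∃ r, RMaxNonExtremalRad 𝓑 C r

/-- Distance between two subsets of `X`. -/
noncomputable def setDist (A B : Set X) : ℝ :=
  sInf ((fun p : X × X => dist p.1 p.2) '' A ×ˢ B)

/-- Two subsets are similar if some isometry of `X` maps one onto the other. -/
def Similar (A B : Set X) : Prop := ∃ g : X ≃ᵢ X, g '' A = B

/-- `[B]` for a ball `B` of radius `r`: `B` together with all balls `B'` of radius `r`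
similar to `B` with `dist(B,B') = r`. -/
def ballClass (B : Set X) (r : ℝ) : Set (Set X) :=
  insert B {B' | (∃ x : X, B' = Metric.ball x r) ∧ Similar B B' ∧ setDist B B' = r}

/-- `g` permutes a finite set `Z`. -/
def PermutesSet (g : X ≃ᵢ X) (Z : Set X) : Prop := g '' Z = Z

/-- `g` permutes an FD family 𝓑. -/
def PermutesFam (g : X ≃ᵢ X) (𝓑 : Set (Set X)) : Prop :=
  (fun B => g '' B) '' 𝓑 = 𝓑

/-- The topology of pointwise convergence on the isometry group of `X`. -/
instance isoTopology (X : Type*) [PseudoEMetricSpace X] : TopologicalSpace (X ≃ᵢ X) :=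
  TopologicalSpace.induced (fun g => (g : X → X)) Pi.topologicalSpace

/-- A topological group has ample generics if each diagonal conjugation action
on `G^(n+1)` has a comeager orbit. -/
def HasAmpleGenerics (G : Type*) [Group G] [TopologicalSpace G] : Prop :=
  ∀ n : ℕ, ∃ v : Fin (n + 1) → G,
    {w : Fin (n + 1) → G | ∃ g : G, ∀ i, w i = g * v i * g⁻¹} ∈ residual (Fin (n + 1) → G)

end UltraGen

/-- In an ultrametric space the distance from `z` is constant on open balls not containing `z`. -/
lemma dist_eq_of_dist_lt {X : Type*} [MetricSpace X] [IsUltrametricDist X] {z u p : X} {r : ℝ}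
    (h : dist u p < r) (hz : r ≤ dist z p) : dist z u = dist z p := by
  have h1 := IsUltrametricDist.dist_triangle_max z u p
  have h2 := IsUltrametricDist.dist_triangle_max z p u
  rw [dist_comm p u] at h2
  grind

/-- An isometry `h` can be replaced by one with the same value at `a` that fixes every point
whose distances to `a` and `h a` are both at least `dist a (h a)`. -/
lemma exists_isometryEquiv_swap {X : Type*} [MetricSpace X] [IsUltrametricDist X] (h : X ≃ᵢ X) (a : X) :
    ∃ k : X ≃ᵢ X, k a = h a ∧
      ∀ y, dist a (h a) ≤ dist y a → dist a (h a) ≤ dist y (h a) → k y = y := by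
  classical
  obtain ⟨b, hb⟩ : ∃ b, b = h a := ⟨_, rfl⟩
  obtain ⟨r, hr⟩ : ∃ r, r = dist a b := ⟨_, rfl⟩
  rw [← hb, ← hr]
  by_cases hab : a = b
  · exact ⟨IsometryEquiv.refl X, hab, fun _ _ _ => rfl⟩
  have hrpos : 0 < r := hr ▸ dist_pos.2 hab
  have hba : dist b a = r := by rw [dist_comm, hr]
  have hh : ∀ x, dist (h x) b = dist x a := fun x => by rw [hb, h.dist_eq]
  have hs : ∀ x, dist (h.symm x) a = dist x b := fun x => by
    rw [← hh, h.apply_symm_apply]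
  -- The two balls are disjoint.
  have disj : ∀ x, dist x a < r → ¬ dist x b < r := fun x h1 h2 => by
    have := IsUltrametricDist.dist_triangle_max a x b
    rw [dist_comm a x] at this
    grind
  have cross : ∀ x y, dist x a < r → dist y b < r → dist x y = r := fun x y hx hy => by
    rw [dist_comm, ← hba]
    have h1 : dist b x = dist b a := dist_eq_of_dist_lt hx hba.ge
    have h2 : dist x y = dist x b := dist_eq_of_dist_lt hy (by rw [dist_comm, h1, hba])
    rw [dist_comm, h2, dist_comm, h1]
  have out : ∀ z, r ≤ dist z a → r ≤ dist z b → dist z a = dist z b := fun z h1 h2 => by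
    have h3 := IsUltrametricDist.dist_triangle_max z a b
    have h4 := IsUltrametricDist.dist_triangle_max z b a
    grind
  let k : X → X := fun x => if dist x a < r then h x else if dist x b < r then h.symm x else x
  have kA : ∀ x, dist x a < r → k x = h x := fun x hx => if_pos hx
  have kB : ∀ x, dist x b < r → k x = h.symm x := fun x hx =>
    (if_neg fun h' => disj x h' hx).trans (if_pos hx)
  have kO : ∀ x, r ≤ dist x a → r ≤ dist x b → k x = x := fun x h1 h2 =>
    (if_neg h1.not_gt).trans (if_neg h2.not_gt)
  have cases3 : ∀ x, dist x a < r ∨ dist x b < r ∨ (r ≤ dist x a ∧ r ≤ dist x b) := by grind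
  have inv : Function.Involutive k := fun x => by
    rcases cases3 x with hx | hx | ⟨h1, h2⟩
    · rw [kA x hx, kB _ (by rwa [hh]), h.symm_apply_apply]
    · rw [kB x hx, kA _ (by rwa [hs]), h.apply_symm_apply]
    · rw [kO x h1 h2, kO x h1 h2]
  have outA : ∀ z x, r ≤ dist z a → r ≤ dist z b → dist x a < r →
      dist z (h x) = dist z x := fun z x h1 h2 hx => by
    rw [dist_eq_of_dist_lt hx h1, dist_eq_of_dist_lt (by rwa [hh] : dist (h x) b < r) h2,
      out z h1 h2]
  have outB : ∀ z x, r ≤ dist z a → r ≤ dist z b → dist x b < r →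
      dist z (h.symm x) = dist z x := fun z x h1 h2 hx => by
    rw [dist_eq_of_dist_lt hx h2, dist_eq_of_dist_lt (by rwa [hs] : dist (h.symm x) a < r) h1,
      out z h1 h2]
  have iso : Isometry k := Isometry.of_dist_eq fun x y => by
    rcases cases3 x with hx | hx | ⟨h1, h2⟩ <;> rcases cases3 y with hy | hy | ⟨h3, h4⟩
    · rw [kA x hx, kA y hy, h.dist_eq]
    · rw [kA x hx, kB y hy, cross x y hx hy, dist_comm, cross _ _ (by rwa [hs]) (by rwa [hh])]
    · rw [kA x hx, kO y h3 h4, dist_comm, outA y x h3 h4 hx, dist_comm]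
    · rw [kB x hx, kA y hy, dist_comm x, cross y x hy hx, cross _ _ (by rwa [hs]) (by rwa [hh])]
    · rw [kB x hx, kB y hy, h.symm.dist_eq]
    · rw [kB x hx, kO y h3 h4, dist_comm, outB y x h3 h4 hx, dist_comm]
    · rw [kO x h1 h2, kA y hy, outA x y h1 h2 hy]
    · rw [kO x h1 h2, kB y hy, outB x y h1 h2 hy]
    · rw [kO x h1 h2, kO y h3 h4]
  refine ⟨⟨inv.toPerm k, iso⟩, ?_, fun y h1 h2 => kO y h1 h2⟩
  exact (kA a (by simpa using hrpos)).trans hb.symm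

theorem extend_partial_isometry_of_orbit_eq
    {X : Type*} [MetricSpace X] [TopologicalSpace.SeparableSpace X] [CompleteSpace X]
    [IsUltrametricDist X]
    (Y Y' : Set X) (hY : Y.Finite) (hY' : Y'.Finite) (f : X → X)
    (hbij : Set.BijOn f Y Y')
    (hiso : ∀ y ∈ Y, ∀ z ∈ Y, dist (f y) (f z) = dist y z)
    (horb : ∀ y ∈ Y, ∃ g : X ≃ᵢ X, g y = f y) :
    ∃ g : X ≃ᵢ X, ∀ y ∈ Y, g y = f y := by
  clear hbij hY'
  induction Y, hY using Set.Finite.induction_on with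
  | empty => exact ⟨IsometryEquiv.refl X, by simp⟩
  | @insert a s _ _ ih =>
    obtain ⟨g, hg⟩ := ih (fun y hy z hz => hiso y (.inr hy) z (.inr hz))
      (fun y hy => horb y (.inr hy))
    obtain ⟨h₀, hh₀⟩ := horb a (.inl rfl)
    obtain ⟨k, hka, hk⟩ := exists_isometryEquiv_swap (h₀.trans g.symm) a
    have hb : (h₀.trans g.symm) a = g.symm (f a) := by simp [hh₀]
    rw [hb] at hka hk
    refine ⟨k.trans g, fun y hy => ?_⟩
    rcases hy with rfl | hy
    · simp [hka]
    · have hd : dist y (g.symm (f a)) = dist y a := by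
        rw [← g.dist_eq, g.apply_symm_apply, hg y hy, hiso y (.inr hy) a (.inl rfl)]
      have hle := IsUltrametricDist.dist_triangle_max a y (g.symm (f a))
      rw [hd, dist_comm a y, max_self] at hle
      simp [hk y hle (hd ▸ hle), hg y hy]
end

section
/- Let X be an ultrametric space. For every finite Y ⊆ X there exists a finite Z ⊆ X with Y ⊆ Z such that every X-extendable partial isometry of Y (an X-extendable distance-preserving bijection between two subsets of Y) extends to an X-extendable isometric bijection of Z onto Z. Moreover, if |Y| > 1, then Z can be chosen so that for every z ∈ Z there is y ∈ Y with d(z,y) < diam(Y). -/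
/-!
The proof is by induction on `|Y|`. When `|Y| ≤ 1` every partial isometry of `Y` is a restriction
of the identity, so `Z = Y` works.

Otherwise put `r = diam Y > 0`. The set `Y` splits into at least two pieces lying in distinct open
balls of radius `r`, any two of these balls being at distance exactly `r`. To every ball of radius
`r` attach an isometry `h` of `X` (constant on the ball), put `φ x = h x x`, and arrange that

* points of `Y` exchanged by an isometry of `X` are sent by `φ` into a common ball of radius `r`;
* every ball of radius `r` contains fewer than `|Y|` points of `φ '' Y`.

If no isometry of `X` moves a point of `Y` to a point of `Y` at distance `r`, then `h = 1` will do: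
no ball of radius `r` contains `Y`. Otherwise `h` is chosen to carry all similar balls to a common
representative, and so that `φ` identifies two points of `Y` (`exists_transport`).

By induction each `φ '' Y ∩ ball c r` is contained in a finite set with the extension property,
and pulling these sets back along `h` gives `Z`, which is contained in the `r`-neighbourhood of `Y`.
A partial isometry `f` of `Y` with an extension `g₀` induces a partial injection on the balls meeting
`Y`, which extends to a permutation `σ` compatible with `φ` (`exists_perm_extend`). On the `i`-th
ball, `f` is realised by `h (σ i)⁻¹ ∘ k ∘ h i`, with `k` provided by the induction hypothesis, and
these isometries are glued together with the identity elsewhere (`exists_glue`).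
-/

open Metric Set Topology

/-! ### Extending partial injections -/

/-- A fibre-preserving partial injection of a finite type extends to a fibre-preserving
permutation. -/
lemma exists_perm_extend {I K : Type*} [Finite I] (κ : I → K) (D : Set I) (s : I → I)
    (hs : Set.InjOn s D) (hκ : ∀ i ∈ D, κ (s i) = κ i) :
    ∃ σ : Equiv.Perm I, (∀ i, κ (σ i) = κ i) ∧ ∀ i ∈ D, σ i = s i := by
  classical
  have fib : ∀ k : K, ∃ τ : Equiv.Perm {i // κ i = k}, ∀ x, x.1 ∈ D → (τ x).1 = s x.1 := by
    intro k
    have := Fintype.ofFinite {i // κ i = k}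
    let s' : {i // κ i = k} → {i // κ i = k} := fun x =>
      if hx : x.1 ∈ D then ⟨s x.1, (hκ _ hx).trans x.2⟩ else x
    have hs' : ∀ x, x.1 ∈ D → (s' x).1 = s x.1 := by
      intro x hx
      simp [s', hx]
    obtain ⟨g, hg⟩ := Set.MapsTo.exists_equiv_extend_of_card_eq
      (s := {x : {i // κ i = k} | x.1 ∈ D}) (t := Finset.univ) (f := s')
      (by simp) (by intro x _; simp) (by
        intro x hx y hy hxy
        have h1 := congrArg Subtype.val hxy
        rw [hs' x hx, hs' y hy] at h1
        exact Subtype.ext (hs hx hy h1))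
    refine ⟨g.trans (Equiv.subtypeUnivEquiv (by simp)), fun x hx => ?_⟩
    have := hg x hx
    simp only [Equiv.trans_apply, Equiv.subtypeUnivEquiv_apply]
    rw [this, hs' x hx]
  choose τ hτ using fib
  refine ⟨((Equiv.sigmaFiberEquiv κ).symm.trans (Equiv.sigmaCongrRight τ)).trans
    (Equiv.sigmaFiberEquiv κ), fun i => ?_, fun i hi => ?_⟩
  · exact (τ (κ i) ⟨i, rfl⟩).2
  · exact hτ (κ i) ⟨i, rfl⟩ hi

/-! ### Gluing isometries along balls -/

section

variable {X : Type*} [MetricSpace X] [IsUltrametricDist X]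

lemma dist_lt_trans' {x y z : X} {r : ℝ} (h1 : dist x y < r) (h2 : dist y z < r) :
    dist x z < r :=
  (dist_triangle_max x y z).trans_lt (max_lt h1 h2)

/-- Isometries that permute, via `σ`, balls of radius `r` lying at mutual distance at most `r`
can be glued together, with the identity outside of these balls. -/
lemma exists_glue {I : Type*} (r : ℝ) (p : I → X)
    (hp : ∀ i j, dist (p i) (p j) ≤ r) (hp' : ∀ i j, dist (p i) (p j) < r → i = j)
    (σ : Equiv.Perm I) (e : I → X ≃ᵢ X) (he : ∀ i, dist (e i (p i)) (p (σ i)) < r) :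
    ∃ g : X ≃ᵢ X, ∀ i x, dist x (p i) < r → g x = e i x := by
  classical
  let g : X → X := fun x => if h : ∃ i, dist x (p i) < r then e h.choose x else x
  have uniq : ∀ {x i j}, dist x (p i) < r → dist x (p j) < r → i = j := by
    intro x i j hi hj
    exact hp' i j (dist_lt_trans' (by rwa [dist_comm]) hj)
  have g1 : ∀ i x, dist x (p i) < r → g x = e i x := by
    intro i x hx
    have h : ∃ i, dist x (p i) < r := ⟨i, hx⟩
    have := uniq hx h.choose_spec
    simp only [g, dif_pos h]
    rw [← this]
  have g2 : ∀ x, (¬ ∃ i, dist x (p i) < r) → g x = x := fun x h => by simp only [g, dif_neg h]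
  have ge : ∀ i x, dist x (p i) < r → dist (e i x) (p (σ i)) < r := by
    intro i x hx
    exact dist_lt_trans' (by rwa [(e i).dist_eq]) (he i)
  -- points of two distinct balls are at distance exactly `r`
  have far : ∀ i j x y, i ≠ j → dist x (p i) < r → dist y (p j) < r → dist x y = r := by
    intro i j x y hij hx hy
    apply le_antisymm
    · have h1 := dist_triangle_max x (p i) y
      have h2 := dist_triangle_max (p i) (p j) y
      rw [dist_comm (p j) y] at h2
      exact h1.trans (max_le hx.le (h2.trans (max_le (hp i j) hy.le)))
    · by_contra! h
      exact hij (uniq hx (dist_lt_trans' h hy))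
  have mixed : ∀ i x y, dist x (p i) < r → (¬ ∃ j, dist y (p j) < r) →
      dist (e i x) y = dist x y := by
    intro i x y hx hy
    have hxr : r ≤ dist x y := by
      by_contra! h
      exact hy ⟨i, dist_lt_trans' (by rwa [dist_comm]) hx⟩
    have her : r ≤ dist (e i x) y := by
      by_contra! h
      exact hy ⟨σ i, dist_lt_trans' (by rwa [dist_comm]) (ge i x hx)⟩
    have hxe : dist x (e i x) ≤ r := by
      by_cases h : i = σ i
      · have := ge i x hx
        rw [← h] at this
        exact (dist_lt_trans' hx (by rwa [dist_comm])).le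
      · exact (far i (σ i) _ _ h hx (ge i x hx)).le
    apply le_antisymm
    · have := dist_triangle_max (e i x) x y
      rw [dist_comm (e i x) x] at this
      exact this.trans (max_le (hxe.trans hxr) le_rfl)
    · exact (dist_triangle_max x (e i x) y).trans (max_le (hxe.trans her) le_rfl)
  have iso : Isometry g := by
    refine Isometry.of_dist_eq fun x y => ?_
    by_cases hx : ∃ i, dist x (p i) < r <;> by_cases hy : ∃ i, dist y (p i) < r
    · obtain ⟨i, hi⟩ := hx
      obtain ⟨j, hj⟩ := hy
      rw [g1 i x hi, g1 j y hj]
      by_cases h : i = j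
      · subst h
        exact (e i).dist_eq x y
      · rw [far i j x y h hi hj,
          far (σ i) (σ j) _ _ (fun h' => h (σ.injective h')) (ge i x hi) (ge j y hj)]
    · obtain ⟨i, hi⟩ := hx
      rw [g1 i x hi, g2 y hy, mixed i x y hi hy]
    · obtain ⟨i, hi⟩ := hy
      rw [g1 i y hi, g2 x hx, dist_comm, mixed i y x hi hx, dist_comm]
    · rw [g2 x hx, g2 y hy]
  have surj : Function.Surjective g := by
    intro y
    by_cases hy : ∃ i, dist y (p i) < r
    · obtain ⟨j, hj⟩ := hy
      obtain ⟨i, rfl⟩ := σ.surjective j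
      refine ⟨(e i).symm y, ?_⟩
      rw [g1 i, IsometryEquiv.apply_symm_apply]
      rw [← (e i).dist_eq, IsometryEquiv.apply_symm_apply]
      exact dist_lt_trans' hj (by rw [dist_comm]; exact he i)
    · exact ⟨y, g2 y hy⟩
  exact ⟨⟨Equiv.ofBijective g ⟨iso.injective, surj⟩, iso⟩, g1⟩

/-! ### Transporting balls to representatives -/

/-- The balls of radius `r` partition `X`; `c` labels each of them by a point. -/
lemma exists_centre (X : Type*) [MetricSpace X] [IsUltrametricDist X] (r : ℝ) (hr : 0 < r) :
    ∃ c : X → X, ∀ x y, c x = c y ↔ dist x y < r := by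
  let S : Setoid X :=
    { r := fun x y => dist x y < r
      iseqv := ⟨fun x => by simpa using hr, fun {x y} h => by rwa [dist_comm],
        fun h1 h2 => dist_lt_trans' h1 h2⟩ }
  refine ⟨fun x => (Quotient.mk S x).out, fun x y => ?_⟩
  rw [Quotient.out_inj]
  exact Quotient.eq (r := S)

/-- Two points are related when some isometry of `X` carries the ball of radius `r` around the
first onto the ball of radius `r` around the second. -/
def similarSetoid (X : Type*) [MetricSpace X] [IsUltrametricDist X] (r : ℝ) (hr : 0 < r) :
    Setoid X where
  r x y := ∃ g : X ≃ᵢ X, dist (g x) y < r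
  iseqv := by
    refine ⟨fun x => ⟨1, by simpa using hr⟩, ?_, ?_⟩
    · rintro x y ⟨g, h⟩
      refine ⟨g.symm, ?_⟩
      rw [← g.dist_eq, IsometryEquiv.apply_symm_apply, dist_comm]
      exact h
    · rintro x y z ⟨g, hg⟩ ⟨k, hk⟩
      refine ⟨k * g, dist_lt_trans' ?_ hk⟩
      rwa [IsometryEquiv.mul_apply, k.dist_eq]

/-- The choice, for every ball of radius `r = diam Y`, of an isometry `h` of `X` transporting this
ball in such a way that points of `Y` in the same orbit land in the same ball, but every ball
receives fewer than `|Y|` points of `Y`. -/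
lemma exists_transport (Y : Set X) (hY : Y.Finite) (r : ℝ) (hr : 0 < r)
    (hfar : ∃ x ∈ Y, ∃ y ∈ Y, r ≤ dist x y) :
    ∃ h : X → X ≃ᵢ X, (∀ x y, dist x y < r → h x = h y) ∧
      (∀ x ∈ Y, ∀ y ∈ Y, ∀ g : X ≃ᵢ X, g x = y → dist (h x x) (h y y) < r) ∧
      ∀ p, (((fun x => h x x) '' Y) ∩ Metric.ball p r).ncard < Y.ncard := by
  classical
  by_cases hc : ∃ y₀ ∈ Y, ∃ y₁ ∈ Y, r ≤ dist y₀ y₁ ∧ ∃ g : X ≃ᵢ X, g y₀ = y₁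
  · obtain ⟨y₀, hy₀, y₁, hy₁, hd, g₁, hg₁⟩ := hc
    obtain ⟨c, hcc⟩ := exists_centre X r hr
    let S := similarSetoid X r hr
    -- `e x` carries the ball around `x` to the representative of its similarity class
    have he : ∀ x : X, ∃ g : X ≃ᵢ X, dist (g x) (Quotient.mk S x).out < r := fun x =>
      Quotient.exact (s := S) (Quotient.out_eq (Quotient.mk S x)).symm
    choose e he using he
    have hcx : ∀ x, ∃ z, c z = c x := fun x => ⟨x, rfl⟩
    -- the choice of `z` depends on `c x` only, making `h` constant on balls
    let q : X → X := fun x => (hcx x).choose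
    have hq : ∀ x, dist (q x) x < r := fun x => (hcc _ _).1 (hcx x).choose_spec
    have hqc : ∀ x y, dist x y < r → q x = q y := by
      intro x y hxy
      have : c x = c y := (hcc x y).2 hxy
      simp only [q, this]
    have hmk : ∀ x y : X, (∃ g : X ≃ᵢ X, dist (g x) y < r) → Quotient.mk S x = Quotient.mk S y :=
      fun x y h => Quotient.sound (s := S) h
    let h : X → X ≃ᵢ X := fun x => if dist x y₀ < r then e (q y₁) * g₁ else e (q x)
    have hland : ∀ x, dist (h x x) (Quotient.mk S x).out < r := by
      intro x
      by_cases hx : dist x y₀ < r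
      · have h1 : Quotient.mk S x = Quotient.mk S (q y₁) := by
          apply hmk
          refine ⟨g₁, dist_lt_trans' (y := y₁) ?_ (by rw [dist_comm]; exact hq y₁)⟩
          rwa [← hg₁, g₁.dist_eq]
        simp only [h, if_pos hx, IsometryEquiv.mul_apply]
        rw [h1]
        refine dist_lt_trans' ?_ (he (q y₁))
        rw [(e (q y₁)).dist_eq]
        refine dist_lt_trans' (y := y₁) ?_ (by rw [dist_comm]; exact hq y₁)
        rwa [← hg₁, g₁.dist_eq]
      · have h1 : Quotient.mk S x = Quotient.mk S (q x) :=
          hmk _ _ ⟨1, by rw [dist_comm]; simpa using hq x⟩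
        simp only [h, if_neg hx]
        rw [h1]
        refine dist_lt_trans' ?_ (he (q x))
        rw [(e (q x)).dist_eq, dist_comm]
        exact hq x
    refine ⟨h, ?_, ?_, ?_⟩
    · intro x y hxy
      have : dist x y₀ < r ↔ dist y y₀ < r :=
        ⟨fun h => dist_lt_trans' (by rwa [dist_comm]) h, fun h => dist_lt_trans' hxy h⟩
      simp only [h, this, hqc x y hxy]
    · intro x _ y _ g hg
      have h1 := hland x
      rw [hmk x y ⟨g, by rw [hg]; simpa using hr⟩] at h1
      have h2 := hland y
      exact dist_lt_trans' h1 (by rwa [dist_comm])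
    · intro p
      have hnot : ¬ dist y₁ y₀ < r := by rw [dist_comm]; exact not_lt.2 hd
      have hne : y₀ ≠ y₁ := by
        rintro rfl
        rw [dist_self] at hd
        linarith
      have heq : h y₀ y₀ = h y₁ y₁ := by
        simp only [h, dist_self, if_pos hr, if_neg hnot, IsometryEquiv.mul_apply, hg₁]
      have hle : ((fun x => h x x) '' Y).ncard < Y.ncard := by
        refine lt_of_le_of_ne (Set.ncard_image_le hY) fun hcard => ?_
        exact hne ((Set.injOn_of_ncard_image_eq hcard hY) hy₀ hy₁ heq)
      exact (Set.ncard_le_ncard Set.inter_subset_left (hY.image _)).trans_lt hle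
  · push Not at hc
    refine ⟨fun _ => 1, fun _ _ _ => rfl, ?_, ?_⟩
    · intro x hx y hy g hg
      by_contra! h
      exact hc x hx y hy (by simpa using h) g hg
    · intro p
      have : (fun x : X => (1 : X ≃ᵢ X) x) '' Y = Y := by simp
      rw [this]
      apply Set.ncard_lt_ncard _ hY
      refine ⟨Set.inter_subset_left, fun hsub => ?_⟩
      obtain ⟨x, hx, y, hy, hxy⟩ := hfar
      have h1 : dist x p < r := (hsub hx).2
      have h2 : dist y p < r := (hsub hy).2
      exact absurd (dist_lt_trans' h1 (by rwa [dist_comm])) (not_lt.2 hxy)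

/-! ### The induction -/

/-- Every `X`-extendable partial isometry of `Y` extends to an isometry of `X` preserving `Z`. -/
def HasExtensions (Y Z : Set X) : Prop :=
  ∀ (A B : Set X), A ⊆ Y → B ⊆ Y → ∀ f : X → X, Set.BijOn f A B →
    (∃ g : X ≃ᵢ X, ∀ a ∈ A, g a = f a) →
    ∃ g : X ≃ᵢ X, g '' Z = Z ∧ ∀ a ∈ A, g a = f a

/-- The inductive step: if every finite set smaller than `Y` has a finite superset with the
extension property, then so has `Y`, and the superset may be taken in the `r`-neighbourhood
of `Y`, where `r = diam Y`. -/
lemma extension_step (Y : Set X) (hY : Y.Finite) (r : ℝ) (hr : 0 < r)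
    (hfar : ∃ x ∈ Y, ∃ y ∈ Y, r ≤ dist x y) (hdiam : ∀ x ∈ Y, ∀ y ∈ Y, dist x y ≤ r)
    (IH : ∀ S : Set X, S.Finite → S.ncard < Y.ncard →
      ∃ Z : Set X, Z.Finite ∧ S ⊆ Z ∧ HasExtensions S Z) :
    ∃ Z : Set X, Z.Finite ∧ Y ⊆ Z ∧ HasExtensions Y Z ∧ ∀ z ∈ Z, ∃ y ∈ Y, dist z y < r := by
  classical
  obtain ⟨h, hball, horb, hcard⟩ := exists_transport Y hY r hr hfar
  obtain ⟨c, hc⟩ := exists_centre X r hr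
  set φ : X → X := fun x => h x x with hφ
  let W : X → Set X := fun x => φ '' Y ∩ Metric.ball (φ x) r
  have hW : ∀ x y, dist (φ x) (φ y) < r → W x = W y := by
    intro x y hxy
    ext z
    simp only [W, Set.mem_inter_iff, Metric.mem_ball]
    refine and_congr_right fun _ => ⟨fun hz => dist_lt_trans' hz hxy, fun hz =>
      dist_lt_trans' hz (by rwa [dist_comm])⟩
  have hφd : ∀ x y, dist x y < r → dist (φ x) (φ y) < r := by
    intro x y hxy
    simp only [hφ]
    rwa [hball x y hxy, (h y).dist_eq]
  -- the extension sets are indexed by the sets `W x`, hence agree for equal `W x`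
  have IH' : ∀ S : Set X, ∃ Z : Set X, S.Finite → S.ncard < Y.ncard →
      (Z.Finite ∧ S ⊆ Z ∧ HasExtensions S Z) := by
    intro S
    by_cases h1 : S.Finite ∧ S.ncard < Y.ncard
    · obtain ⟨Z, hZ⟩ := IH S h1.1 h1.2
      exact ⟨Z, fun _ _ => hZ⟩
    · exact ⟨∅, fun h2 h3 => absurd ⟨h2, h3⟩ h1⟩
  choose E hE' using IH'
  have hE : ∀ x, (E (W x)).Finite ∧ W x ⊆ E (W x) ∧ HasExtensions (W x) (E (W x)) := fun x =>
    hE' (W x) ((hY.image φ).subset Set.inter_subset_left) (hcard (φ x))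
  let Z : Set X := {z | (∃ y ∈ Y, dist z y < r) ∧ φ z ∈ E (W z)}
  have hZfin : Z.Finite := by
    have hfin : (⋃ y ∈ Y, (h y) ⁻¹' (E (W y))).Finite :=
      hY.biUnion fun y _ => (hE y).1.preimage (h y).injective.injOn
    refine hfin.subset ?_
    rintro z ⟨⟨y, hy, hzy⟩, hz⟩
    simp only [Set.mem_iUnion, Set.mem_preimage]
    refine ⟨y, hy, ?_⟩
    rw [← hW z y (hφd z y hzy), ← hball z y hzy]
    exact hz
  refine ⟨Z, hZfin, ?_, ?_, fun z hz => hz.1⟩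
  · intro y hy
    refine ⟨⟨y, hy, by simpa using hr⟩, (hE y).2.1 ⟨⟨y, hy, rfl⟩, by simpa using hr⟩⟩
  intro A B hA hB f hf ⟨g₀, hg₀⟩
  have hfY : ∀ a ∈ A, f a ∈ Y := fun a ha => hB (hf.mapsTo ha)
  -- the balls of radius `r` meeting `Y`, each with a chosen point `p i` of `Y` in it
  let I := {x // x ∈ c '' Y}
  have : Finite I := (hY.image c).to_subtype
  have hI : ∀ i : I, ∃ y ∈ Y, c y = i.1 := fun i => i.2
  choose p hpY hpc using hI
  have hp' : ∀ i j, dist (p i) (p j) < r → i = j := by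
    intro i j hij
    apply Subtype.ext
    rw [← hpc i, ← hpc j, hc]
    exact hij
  let ix : ∀ y, y ∈ Y → I := fun y hy => ⟨c y, y, hy, rfl⟩
  have hix : ∀ y (hy : y ∈ Y), dist y (p (ix y hy)) < r := fun y hy => by
    rw [← hc, hpc]
  let D : Set I := {i | ∃ a ∈ A, dist a (p i) < r}
  have hs : ∀ i : I, ∃ j : I, ∀ a ∈ A, dist a (p i) < r → dist (f a) (p j) < r := by
    intro i
    by_cases hi : i ∈ D
    · obtain ⟨a, ha, hai⟩ := hi
      refine ⟨ix (f a) (hfY a ha), fun b hb hbi => ?_⟩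
      refine dist_lt_trans' ?_ (hix (f a) (hfY a ha))
      rw [← hg₀ a ha, ← hg₀ b hb, g₀.dist_eq]
      exact dist_lt_trans' hbi (by rwa [dist_comm])
    · exact ⟨i, fun a ha hai => absurd ⟨a, ha, hai⟩ hi⟩
  choose s hs using hs
  obtain ⟨σ, hσκ, hσ⟩ := exists_perm_extend (fun i => c (φ (p i))) D s (by
    rintro i ⟨a, ha, hai⟩ j ⟨b, hb, hbj⟩ hij
    have h1 := hs i a ha hai
    have h2 := hs j b hb hbj
    rw [← hij, dist_comm] at h2
    have h3 := dist_lt_trans' h1 (by rwa [dist_comm] at h2 ⊢)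
    rw [← hg₀ a ha, ← hg₀ b hb, g₀.dist_eq] at h3
    exact hp' i j (dist_lt_trans' (by rwa [dist_comm]) (dist_lt_trans' h3 hbj))) (by
    rintro i ⟨a, ha, hai⟩
    rw [hc]
    have h1 := hs i a ha hai
    have h2 := horb a (hA ha) (f a) (hfY a ha) g₀ (hg₀ a ha)
    have h3 := hφd _ _ h1
    have h4 := hφd _ _ hai
    rw [dist_comm] at h2 h3
    exact dist_lt_trans' h3 (dist_lt_trans' h2 h4))
  have hσφ : ∀ i, dist (φ (p (σ i))) (φ (p i)) < r := fun i => (hc _ _).1 (hσκ i)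
  -- `e = h (σ i)⁻¹ ∘ k ∘ h i`
  have he : ∀ i : I, ∃ e : X ≃ᵢ X, dist (e (p i)) (p (σ i)) < r ∧
      (∀ x, h (p i) x ∈ E (W (p i)) → h (p (σ i)) (e x) ∈ E (W (p i))) ∧
      ∀ a ∈ A, dist a (p i) < r → e a = f a := by
    intro i
    by_cases hi : i ∈ D
    · let f' : X → X := fun x => h (p (σ i)) (g₀ ((h (p i)).symm x))
      let A' : Set X := h (p i) '' {a | a ∈ A ∧ dist a (p i) < r}
      have hf'a : ∀ a ∈ A, f' (h (p i) a) = h (p (σ i)) (f a) := by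
        intro a ha
        simp only [f', IsometryEquiv.symm_apply_apply, hg₀ a ha]
      have hfσ : ∀ a ∈ A, dist a (p i) < r → dist (f a) (p (σ i)) < r := by
        intro a ha hai
        rw [hσ i hi]
        exact hs i a ha hai
      obtain ⟨k, hkE, hk⟩ := (hE (p i)).2.2 A' (f' '' A') (by
        rintro _ ⟨a, ⟨ha, hai⟩, rfl⟩
        refine ⟨⟨a, hA ha, ?_⟩, ?_⟩
        · simp only [hφ, hball a _ hai]
        · simpa only [hφ, Metric.mem_ball, (h (p i)).dist_eq] using hai) (by
        rintro _ ⟨_, ⟨a, ⟨ha, hai⟩, rfl⟩, rfl⟩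
        rw [hf'a a ha, ← hball _ _ (hfσ a ha hai)]
        exact ⟨⟨f a, hfY a ha, rfl⟩, dist_lt_trans' (hφd _ _ (hfσ a ha hai)) (hσφ i)⟩) f'
        (Set.InjOn.bijOn_image (Function.Injective.injOn
          ((h (p (σ i))).injective.comp (g₀.injective.comp (h (p i)).symm.injective))))
        ⟨h (p (σ i)) * g₀ * (h (p i)).symm, fun a _ => rfl⟩
      have hea : ∀ a ∈ A, dist a (p i) < r → (h (p (σ i))).symm (k (h (p i) a)) = f a := by
        intro a ha hai
        rw [hk _ ⟨a, ⟨ha, hai⟩, rfl⟩, hf'a a ha, IsometryEquiv.symm_apply_apply]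
      refine ⟨(h (p (σ i))).symm * k * h (p i), ?_, ?_, hea⟩
      · obtain ⟨a, ha, hai⟩ := hi
        refine dist_lt_trans' ?_ (hfσ a ha hai)
        rw [← hea a ha hai]
        change dist (((h (p (σ i))).symm * k * h (p i)) (p i))
          (((h (p (σ i))).symm * k * h (p i)) a) < r
        rwa [IsometryEquiv.dist_eq, dist_comm]
      · intro x hx
        simp only [IsometryEquiv.mul_apply, IsometryEquiv.apply_symm_apply]
        rw [← hkE]
        exact ⟨_, hx, rfl⟩
    · refine ⟨(h (p (σ i))).symm * h (p i), ?_, ?_, fun a ha hai => absurd ⟨a, ha, hai⟩ hi⟩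
      · rw [← (h (p (σ i))).dist_eq]
        simp only [IsometryEquiv.mul_apply, IsometryEquiv.apply_symm_apply]
        rw [dist_comm]
        exact hσφ i
      · intro x hx
        simpa only [IsometryEquiv.mul_apply, IsometryEquiv.apply_symm_apply] using hx
  choose e he1 he2 he3 using he
  obtain ⟨g, hg⟩ := exists_glue r p (fun i j => hdiam _ (hpY i) _ (hpY j)) hp' σ e he1
  refine ⟨g, ?_, fun a ha => ?_⟩
  · have hsub : g '' Z ⊆ Z := by
      rintro _ ⟨z, ⟨⟨y, hy, hzy⟩, hz⟩, rfl⟩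
      set i := ix y hy with hi
      have hzi : dist z (p i) < r := dist_lt_trans' hzy (hix y hy)
      have hgz : dist (e i z) (p (σ i)) < r :=
        dist_lt_trans' (by rwa [(e i).dist_eq]) (he1 i)
      rw [hg i z hzi]
      refine ⟨⟨_, hpY (σ i), hgz⟩, ?_⟩
      rw [hW _ _ (dist_lt_trans' (hφd _ _ hgz) (hσφ i))]
      simp only [hφ, hball _ _ hgz]
      apply he2
      rw [← hW z _ (hφd _ _ hzi), ← hball _ _ hzi]
      exact hz
    exact Set.eq_of_subset_of_ncard_le hsub
      (Set.ncard_image_of_injective Z g.injective).ge hZfin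
  · rw [hg _ a (hix a (hA ha))]
    exact he3 _ a ha (hix a (hA ha))

/-- In the trivial case `|Y| ≤ 1`, the identity extends every partial isometry. -/
lemma hasExtensions_of_subsingleton {X : Type*} [MetricSpace X] {Y : Set X} (hY : Y.Subsingleton) : HasExtensions Y Y := by
  intro A B hA hB f hf _
  exact ⟨1, by simp, fun a ha => hY (hA ha) (hB (hf.mapsTo ha))⟩

lemma exists_extensions (Y : Set X) (hY : Y.Finite) :
    ∃ Z : Set X, Z.Finite ∧ Y ⊆ Z ∧ HasExtensions Y Z ∧
      (1 < Y.ncard → ∀ z ∈ Z, ∃ y ∈ Y, dist z y < Metric.diam Y) := by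
  induction hn : Y.ncard using Nat.strong_induction_on generalizing Y with
  | _ n ih =>
    subst hn
    by_cases h1 : 1 < Y.ncard
    · have hnt : Y.Nontrivial := (Set.one_lt_ncard_iff_nontrivial_and_finite.1 h1).1
      have hb : Bornology.IsBounded Y := hY.isBounded
      have hr : 0 < Metric.diam Y := Metric.diam_pos hnt hb
      -- the diameter of a finite set is attained
      have hfar : ∃ x ∈ Y, ∃ y ∈ Y, Metric.diam Y ≤ dist x y := by
        obtain ⟨⟨x, y⟩, hxy, hmax⟩ := Set.exists_max_image (Y ×ˢ Y)
          (fun q : X × X => dist q.1 q.2) (hY.prod hY) (hnt.nonempty.prod hnt.nonempty)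
        exact ⟨x, hxy.1, y, hxy.2, Metric.diam_le_of_forall_dist_le dist_nonneg
          fun a ha b hb => hmax (a, b) ⟨ha, hb⟩⟩
      obtain ⟨Z, hZ, hYZ, hext, hnear⟩ := extension_step Y hY _ hr hfar
        (fun x hx y hy => Metric.dist_le_diam_of_mem hb hx hy)
        (fun S hS hSY => by
          obtain ⟨Z, hZ⟩ := ih _ hSY S hS rfl
          exact ⟨Z, hZ.1, hZ.2.1, hZ.2.2.1⟩)
      exact ⟨Z, hZ, hYZ, hext, fun _ => hnear⟩
    · refine ⟨Y, hY, subset_rfl, hasExtensions_of_subsingleton ?_, fun h => absurd h h1⟩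
      have := hY.to_subtype
      exact Set.ncard_le_one_iff_subsingleton.1 (not_lt.1 h1)

end

theorem weak_hrushovski
    {X : Type*} [MetricSpace X] [IsUltrametricDist X]
    (Y : Set X) (hY : Y.Finite) :
    ∃ Z : Set X, Z.Finite ∧ Y ⊆ Z ∧
      (∀ (A B : Set X), A ⊆ Y → B ⊆ Y → ∀ f : X → X, Set.BijOn f A B →
        (∃ g : X ≃ᵢ X, ∀ a ∈ A, g a = f a) →
        ∃ g : X ≃ᵢ X, g '' Z = Z ∧ ∀ a ∈ A, g a = f a) ∧
      (1 < Y.ncard → ∀ z ∈ Z, ∃ y ∈ Y, dist z y < Metric.diam Y) :=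
  exists_extensions Y hY
end

section
/- Let X be an ultrametric space and let 𝓑 be an FD family in X. Then every ball which is 𝓑-non-extremal in X is contained in a ball which is r-maximal 𝓑-non-extremal in X. Moreover, 𝒪^𝓑(D) ⊆ [D] for every ball D which is r-maximal 𝓑-non-extremal in X. -/
/-!
The family `𝓑` enters only through the group `G = τ(Id, 𝓑)`. By the ultrametric inequality,
`g ∈ G` fixes `ball x r` exactly when `dist x (g x) < r`, and if it does not, then
`ball x r` and its image are at distance exactly `dist x (g x) ≥ r` (`setDist_ball`). Hence
`ball x r` is non-extremal iff its `G`-orbit is finite and `r ≤ dist x (g x)` for some `g ∈ G`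
(`not_extremal_ball_iff`); finiteness of the orbit passes to larger radii, because the image of a
small ball determines the image of the large one (`orb_ball_finite_mono`).

For existence, let `ball x r` be non-extremal. The displacements `dist x (g x) ≥ r` are distances
from `ball x r` to members of its finite orbit, so there is a largest one, `s`. Then `ball x s` is
non-extremal, and any larger ball around it is fixed by `G`.

For the inclusion, let `D = ball x r` be r-maximal and `g ∈ G` with `g D ≠ D`. If
`s = dist x (g x)` exceeded `r`, then `ball x s` would have finite orbit and would be moved by `g`,
so it would be non-extremal, against maximality. So `s = r`, which says that `D` and `g D` are at
distance `r`.
-/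

open Metric Set Topology

namespace UltraGen

lemma one_mem_tau {X : Type*} [MetricSpace X] (𝓑 : Set (Set X)) :
    (1 : X ≃ᵢ X) ∈ tau (1 : X ≃ᵢ X) 𝓑 := fun _ _ => rfl

lemma self_mem_orb {X : Type*} [MetricSpace X] (𝓑 : Set (Set X)) (C : Set X) : C ∈ orb 𝓑 C :=
  ⟨1, one_mem_tau 𝓑, Set.image_id C⟩

lemma ball_eq_ball_iff {X : Type*} [MetricSpace X] [IsUltrametricDist X] {x y : X} {r : ℝ}
    (hr : 0 < r) : Metric.ball y r = Metric.ball x r ↔ dist x y < r := by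
  constructor
  · intro h
    have hx : x ∈ Metric.ball y r := h ▸ Metric.mem_ball_self hr
    exact hx
  · intro h
    exact IsUltrametricDist.ball_eq_of_mem h

lemma not_extremal_ball_iff {X : Type*} [MetricSpace X] [IsUltrametricDist X]
    (𝓑 : Set (Set X)) (x : X) {r : ℝ} (hr : 0 < r) :
    ¬ Extremal 𝓑 (Metric.ball x r) ↔
      (orb 𝓑 (Metric.ball x r)).Finite ∧
        ∃ g ∈ tau (1 : X ≃ᵢ X) 𝓑, r ≤ dist x (g x) := by
  unfold Extremal
  rw [not_or, Set.not_infinite]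
  refine and_congr_right fun _ => ?_
  constructor
  · intro h
    by_contra! hc
    refine h ⟨Metric.ball x r, Set.Subset.antisymm ?_ ?_⟩
    · rintro _ ⟨g, hg, rfl⟩
      simp only [IsometryEquiv.image_ball, Set.mem_singleton_iff]
      exact (ball_eq_ball_iff hr).2 (hc g hg)
    · exact Set.singleton_subset_iff.2 (self_mem_orb 𝓑 _)
  · rintro ⟨g, hg, hle⟩ ⟨D, hD⟩
    have h1 : Metric.ball x r ∈ ({D} : Set (Set X)) := hD ▸ self_mem_orb 𝓑 _
    have h2 : g '' Metric.ball x r ∈ ({D} : Set (Set X)) := hD ▸ ⟨g, hg, rfl⟩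
    rw [Set.mem_singleton_iff] at h1 h2
    rw [IsometryEquiv.image_ball] at h2
    exact hle.not_gt ((ball_eq_ball_iff hr).1 (h2.trans h1.symm))

/-- The image of `ball x r'` under an isometry is recovered from the image of `ball x r` as the
union of the balls of radius `r'` centered in it. -/
lemma orb_ball_finite_mono {X : Type*} [MetricSpace X] [IsUltrametricDist X]
    (𝓑 : Set (Set X)) (x : X) {r r' : ℝ} (hr : 0 < r) (hrr' : r ≤ r')
    (h : (orb 𝓑 (Metric.ball x r)).Finite) : (orb 𝓑 (Metric.ball x r')).Finite := by
  refine (h.image fun B => ⋃ y ∈ B, Metric.ball y r').subset ?_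
  rintro _ ⟨g, hg, rfl⟩
  refine ⟨_, ⟨g, hg, rfl⟩, ?_⟩
  simp only [IsometryEquiv.image_ball]
  refine Set.Subset.antisymm (Set.iUnion₂_subset fun y hy => ?_) ?_
  · exact ((ball_eq_ball_iff (hr.trans_le hrr')).2
      (by rw [dist_comm]; exact lt_of_lt_of_le hy hrr')).le
  · exact Set.subset_biUnion_of_mem (u := fun y => Metric.ball y r') (Metric.mem_ball_self hr)

/-- All distances between points of two disjoint balls of radius `r` are equal to the distance
of the centers. -/
lemma setDist_ball {X : Type*} [MetricSpace X] [IsUltrametricDist X] {x y : X} {r : ℝ}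
    (hr : 0 < r) (hxy : r ≤ dist x y) :
    setDist (Metric.ball x r) (Metric.ball y r) = dist x y := by
  have key : (fun p : X × X => dist p.1 p.2) '' Metric.ball x r ×ˢ Metric.ball y r
      = {dist x y} := by
    refine Set.Subset.antisymm ?_ ?_
    · rintro _ ⟨⟨a, b⟩, ⟨ha, hb⟩, rfl⟩
      simp only [Metric.mem_ball] at ha hb
      simp only [Set.mem_singleton_iff]
      have h1 := dist_triangle_max a x b
      have h2 := dist_triangle_max x y b
      have h3 := dist_triangle_max x a y
      have h4 := dist_triangle_max a b y
      rw [dist_comm x a] at h3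
      rw [dist_comm y b] at h2
      grind
    · rw [Set.singleton_subset_iff]
      exact ⟨(x, y), ⟨Metric.mem_ball_self hr, Metric.mem_ball_self hr⟩, rfl⟩
  rw [setDist, key, csInf_singleton]

end UltraGen

open UltraGen in
theorem rmax_exists_and_orb_subset_ballClass
    {X : Type*} [MetricSpace X] [IsUltrametricDist X]
    (𝓑 : Set (Set X)) (h𝓑 : FDFamily 𝓑) :
    (∀ C : Set X, IsBall C → ¬ Extremal 𝓑 C →
      ∃ D : Set X, C ⊆ D ∧ RMaxNonExtremal 𝓑 D) ∧
    (∀ (D : Set X) (r : ℝ), RMaxNonExtremalRad 𝓑 D r → orb 𝓑 D ⊆ ballClass D r) := by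
  constructor
  · rintro _ ⟨r, hr, x, rfl⟩ hC
    obtain ⟨hfin, g₀, hg₀, hle₀⟩ := (not_extremal_ball_iff 𝓑 x hr).1 hC
    -- The displacements of `x` that are at least `r`.
    let S : Set ℝ := {s | r ≤ s ∧ ∃ g ∈ tau (1 : X ≃ᵢ X) 𝓑, dist x (g x) = s}
    have hS : S.Finite := by
      refine (hfin.image fun B => setDist (Metric.ball x r) B).subset ?_
      rintro _ ⟨hle, g, hg, rfl⟩
      refine ⟨_, ⟨g, hg, rfl⟩, ?_⟩
      simp only [IsometryEquiv.image_ball]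
      exact setDist_ball hr hle
    obtain ⟨s, ⟨hrs, g, hg, hgs⟩, hmax⟩ :=
      Set.exists_max_image S id hS ⟨_, hle₀, g₀, hg₀, rfl⟩
    have hs : 0 < s := hr.trans_le hrs
    refine ⟨Metric.ball x s, Metric.ball_subset_ball hrs, s, ⟨hs, x, rfl⟩,
      (not_extremal_ball_iff 𝓑 x hs).2
        ⟨orb_ball_finite_mono 𝓑 x hr hrs hfin, g, hg, hgs.ge⟩, ?_⟩
    rintro _ r' hr' ⟨hr'0, y, rfl⟩ hsub
    have hxy : x ∈ Metric.ball y r' := hsub (Metric.mem_ball_self hs)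
    rw [IsUltrametricDist.ball_eq_of_mem hxy]
    by_contra hne
    obtain ⟨-, g', hg', hle'⟩ := (not_extremal_ball_iff 𝓑 x hr'0).1 hne
    have : dist x (g' x) ≤ s := hmax _ ⟨by linarith, g', hg', rfl⟩
    linarith
  · rintro _ r ⟨⟨hr, x, rfl⟩, hne, hmax⟩ _ ⟨g, hg, rfl⟩
    obtain ⟨hfin, -⟩ := (not_extremal_ball_iff 𝓑 x hr).1 hne
    rcases lt_or_ge (dist x (g x)) r with hlt | hge
    · left
      simp only [IsometryEquiv.image_ball]
      exact (ball_eq_ball_iff hr).2 hlt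
    · right
      refine ⟨⟨g x, IsometryEquiv.image_ball g x r⟩, ⟨g, rfl⟩, ?_⟩
      simp only [IsometryEquiv.image_ball]
      rw [setDist_ball hr hge]
      refine le_antisymm (not_lt.1 fun hlt => ?_) hge
      exact (not_extremal_ball_iff 𝓑 x (hr.trans hlt)).2
        ⟨orb_ball_finite_mono 𝓑 x hr hge hfin, g, hg, le_rfl⟩
        (hmax _ _ hlt ⟨hr.trans hlt, x, rfl⟩ (Metric.ball_subset_ball hge))
end

section
/- Let X be an ultrametric space and let 𝓑 be an FD family in X. If C, C' are balls such that C' ∈ [C] and neither C nor C' contains an element of 𝓑, then C' ∈ 𝒪^𝓑(C). -/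
/-!
If `C' = C`, the identity works. Otherwise take an isometry `g` with `g[C] = C'`; the balls `C`, `C'`
are disjoint, and any two of their points are at distance exactly `r`. The required isometry is the
swap of `C` and `C'` along `g`: it is `g` on `C`, `g⁻¹` on `C'`, and the identity elsewhere
(`swapFun`). This is an involution that moves no point by more than `r`, and it is an isometry on
pairs at distance `< r`, since these lie both in `C`, both in `C'`, or both outside `C ∪ C'`; by the
strong triangle inequality it does not increase distances `≥ r` either, so as an involution it is an
isometry. A ball of `𝓑` of radius `> r` is preserved because points move by at most `r`; a ball of
`𝓑` of radius `≤ r` is disjoint from `C` and `C'`, as otherwise it would be contained in one of them,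
and so it is fixed pointwise.
-/

open Metric Set Topology

open scoped Classical in
/-- The swap of `C` and `C'` along `g`: it is `g` on `C`, `g⁻¹` on `C'`, and the identity elsewhere.
It is meant for disjoint `C`, `C'` with `g[C] = C'`. -/
noncomputable def swapFun {X : Type*} [MetricSpace X] (g : X ≃ᵢ X) (C C' : Set X) (x : X) : X :=
  if x ∈ C then g x else if x ∈ C' then g.symm x else x

section Swap

variable {X : Type*} [MetricSpace X] {g : X ≃ᵢ X} {C C' : Set X}

theorem swapFun_of_mem {x : X} (hx : x ∈ C) : swapFun g C C' x = g x := by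
  simp [swapFun, hx]

theorem swapFun_of_mem' (hd : Disjoint C C') {x : X} (hx : x ∈ C') :
    swapFun g C C' x = g.symm x := by
  simp [swapFun, hx, Set.disjoint_right.1 hd hx]

theorem swapFun_of_notMem {x : X} (hx : x ∉ C) (hx' : x ∉ C') : swapFun g C C' x = x := by
  simp [swapFun, hx, hx']

theorem swapFun_involutive (hg : g '' C = C') (hd : Disjoint C C') :
    Function.Involutive (swapFun g C C') := by
  intro x
  by_cases hx : x ∈ C
  · have hgx : g x ∈ C' := hg ▸ Set.mem_image_of_mem g hx
    rw [swapFun_of_mem hx, swapFun_of_mem' hd hgx, g.symm_apply_apply]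
  by_cases hx' : x ∈ C'
  · have hgx : g.symm x ∈ C := by
      obtain ⟨y, hy, rfl⟩ := hg ▸ hx'
      rwa [g.symm_apply_apply]
    rw [swapFun_of_mem' hd hx', swapFun_of_mem hgx, g.apply_symm_apply]
  · rw [swapFun_of_notMem hx hx', swapFun_of_notMem hx hx']

/-- The swap moves no point by more than `r`, if `r` bounds all distances between `C` and `C'`
from above. -/
theorem dist_swapFun_self_le {r : ℝ} (hr : 0 ≤ r) (hg : g '' C = C') (hd : Disjoint C C')
    (hdist : ∀ x ∈ C, ∀ y ∈ C', dist x y ≤ r) (x : X) :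
    dist (swapFun g C C' x) x ≤ r := by
  by_cases hx : x ∈ C
  · rw [swapFun_of_mem hx, dist_comm]
    exact hdist _ hx _ (hg ▸ Set.mem_image_of_mem g hx)
  by_cases hx' : x ∈ C'
  · obtain ⟨y, hy, rfl⟩ := hg ▸ hx'
    rw [swapFun_of_mem' hd hx', g.symm_apply_apply]
    exact hdist _ hy _ hx'
  · rw [swapFun_of_notMem hx hx', dist_self]
    exact hr

end Swap

/-- In an ultrametric space, a ball of radius `s ≤ r` meeting a ball of radius `r` lies in it. -/
theorem ball_subset_of_mem_of_mem {X : Type*} [MetricSpace X] [IsUltrametricDist X]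
    {x z a : X} {r s : ℝ} (hsr : s ≤ r) (hz : z ∈ Metric.ball x s) (hz' : z ∈ Metric.ball a r) :
    Metric.ball x s ⊆ Metric.ball a r := by
  rw [IsUltrametricDist.ball_eq_of_mem hz, IsUltrametricDist.ball_eq_of_mem hz']
  exact Metric.ball_subset_ball hsr

/-- Two balls of radius `r` at distance `r` have all their mutual distances equal to `r`: these
distances are at least `r`, and they are all equal by the strong triangle inequality. -/
theorem dist_eq_of_setDist_eq {X : Type*} [MetricSpace X] [IsUltrametricDist X]
    {a b : X} {r : ℝ}
    (h : UltraGen.setDist (Metric.ball a r) (Metric.ball b r) = r) :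
    ∀ x ∈ Metric.ball a r, ∀ y ∈ Metric.ball b r, dist x y = r := by
  have hle : ∀ x ∈ Metric.ball a r, ∀ y ∈ Metric.ball b r, r ≤ dist x y := by
    intro x hx y hy
    rw [← h]
    refine csInf_le ⟨0, ?_⟩ ⟨(x, y), ⟨hx, hy⟩, rfl⟩
    rintro _ ⟨p, -, rfl⟩
    exact dist_nonneg
  intro x hx y hy
  refine le_antisymm ?_ (hle x hx y hy)
  rw [← h]
  refine le_csInf ⟨_, (x, y), ⟨hx, hy⟩, rfl⟩ ?_
  rintro _ ⟨⟨u, v⟩, ⟨hu, hv⟩, rfl⟩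
  have huv := hle u hu v hv
  have hxu : dist x u < r := by
    rw [IsUltrametricDist.ball_eq_of_mem hu] at hx
    exact hx
  have hvy : dist v y < r := by
    rw [IsUltrametricDist.ball_eq_of_mem hy] at hv
    exact hv
  calc dist x y ≤ max (dist x u) (dist u y) := dist_triangle_max _ _ _
    _ ≤ max (dist x u) (max (dist u v) (dist v y)) :=
        max_le_max le_rfl (dist_triangle_max _ _ _)
    _ ≤ dist u v := max_le (by linarith) (max_le le_rfl (by linarith))

open UltraGen in
theorem mem_orb_of_mem_ballClass
    {X : Type*} [MetricSpace X] [IsUltrametricDist X]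
    (𝓑 : Set (Set X)) (h𝓑 : FDFamily 𝓑)
    (C : Set X) (r : ℝ) (hC : IsBallRad C r)
    (C' : Set X) (hC' : C' ∈ ballClass C r)
    (h1 : ¬ ∃ B ∈ 𝓑, B ⊆ C) (h2 : ¬ ∃ B ∈ 𝓑, B ⊆ C') :
    C' ∈ orb 𝓑 C := by
  rcases hC' with rfl | ⟨⟨b, rfl⟩, ⟨g, hg⟩, hdist⟩
  · exact ⟨1, fun _ _ => rfl, Set.image_id _⟩
  obtain ⟨hr, a, rfl⟩ := hC
  have hD := dist_eq_of_setDist_eq hdist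
  have hd : Disjoint (Metric.ball a r) (Metric.ball b r) := by
    rw [Set.disjoint_left]
    intro x hx hx'
    have := hD x hx x hx'
    rw [dist_self] at this
    exact hr.ne this
  set f := swapFun g (Metric.ball a r) (Metric.ball b r) with hf
  have hinv : Function.Involutive f := swapFun_involutive hg hd
  have hmove : ∀ x, dist (f x) x ≤ r :=
    dist_swapFun_self_le hr.le hg hd fun x hx y hy => (hD x hx y hy).le
  have hball : ∀ {x y c : X}, dist x y < r → (x ∈ Metric.ball c r ↔ y ∈ Metric.ball c r) := by
    intro x y c hxy
    constructor
    · intro hx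
      rw [IsUltrametricDist.ball_eq_of_mem hx]
      exact Metric.mem_ball'.2 hxy
    · intro hy
      rw [IsUltrametricDist.ball_eq_of_mem hy]
      exact hxy
  have hnonexp : ∀ x y, dist (f x) (f y) ≤ dist x y := by
    intro x y
    rcases lt_or_ge (dist x y) r with hxy | hxy
    · by_cases hx : x ∈ Metric.ball a r
      · rw [hf, swapFun_of_mem hx, swapFun_of_mem ((hball hxy).1 hx), g.dist_eq]
      by_cases hx' : x ∈ Metric.ball b r
      · rw [hf, swapFun_of_mem' hd hx', swapFun_of_mem' hd ((hball hxy).1 hx'), g.symm.dist_eq]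
      · rw [hf, swapFun_of_notMem hx hx',
          swapFun_of_notMem (fun h => hx ((hball hxy).2 h)) (fun h => hx' ((hball hxy).2 h))]
    · have hx := hmove x
      have hy := hmove y
      rw [dist_comm] at hy
      calc dist (f x) (f y) ≤ max (dist (f x) x) (dist x (f y)) := dist_triangle_max _ _ _
        _ ≤ max (dist (f x) x) (max (dist x y) (dist y (f y))) :=
            max_le_max le_rfl (dist_triangle_max _ _ _)
        _ ≤ dist x y := max_le (by linarith) (max_le le_rfl (by linarith))
  have hiso : Isometry f := by
    refine Isometry.of_dist_eq fun x y => le_antisymm (hnonexp x y) ?_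
    have := hnonexp (f x) (f y)
    rwa [hinv x, hinv y] at this
  refine ⟨⟨hinv.toPerm, hiso⟩, ?_, ?_⟩
  · intro B hB
    change f '' B = id '' B
    rw [Set.image_id]
    obtain ⟨s, -, c, rfl⟩ := h𝓑.2.1 B hB
    rcases lt_or_ge r s with hrs | hsr
    · have hsub : ∀ x ∈ Metric.ball c s, f x ∈ Metric.ball c s := by
        intro x hx
        rw [IsUltrametricDist.ball_eq_of_mem hx]
        exact lt_of_le_of_lt (hmove x) hrs
      refine Set.Subset.antisymm (Set.image_subset_iff.2 hsub) fun x hx => ?_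
      exact ⟨f x, hsub x hx, hinv x⟩
    · have hfix : ∀ x ∈ Metric.ball c s, f x = x := fun x hx =>
        swapFun_of_notMem (fun h => h1 ⟨_, hB, ball_subset_of_mem_of_mem hsr hx h⟩)
          (fun h => h2 ⟨_, hB, ball_subset_of_mem_of_mem hsr hx h⟩)
      rw [Set.image_congr hfix, Set.image_id']
  · change f '' Metric.ball a r = Metric.ball b r
    rw [← hg]
    exact Set.image_congr fun x hx => swapFun_of_mem hx
end

section
/- Let X be an ultrametric space, let 𝓑 be an FD family in X, and let C be a ball which is r-maximal 𝓑-non-extremal in X. If 𝓑' is an FD family strengthening 𝓑 such that no element of [C] contains an element of 𝓑', then 𝒪^{𝓑'}(C) = [C], and the action of τ(Id,𝓑') on [C] induces the full symmetric group of [C]: every permutation of [C] is induced by some element of τ(Id,𝓑'). -/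
/-!
The class `[C]` of `C = ball x r` consists of the images `h '' C` of isometries `h` moving `x` by at
most `r` (`mem_ballClass_ball_iff`).

*Every permutation of `[C]` is induced.*  Fix for each `D ∈ [C]` an isometry `h D` carrying `C` onto
`D`.  Given a permutation `σ`, the map equal to `h (σ D) ∘ (h D)⁻¹` on each `D` and to the identity
off `⋃ [C]` does not increase distances: two points less than `r` apart lie in the same `D` or are
both fixed, and for the others it matters only that no point moves by more than `r`.  As its inverse
is the map of `σ⁻¹`, it is an isometry (`exists_isometryEquiv_of_perm`).
It stabilises each `B ∈ 𝓑'`: if a radius of `B` exceeds `r`, then `B` absorbs a displacement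
of at most `r`; otherwise `B` would lie inside any element of `[C]` it meets, so by hypothesis it
meets none and is fixed pointwise.  Transpositions then give `[C] ⊆ 𝒪^𝓑'(C)`.

*The orbit stays in `[C]`.*  If `g ∈ τ(Id, 𝓑') ⊆ τ(Id, 𝓑)` moved `x` by `s > r`, the ball
`C' = ball x s` would be moved by `g`, hence, being extremal, would have an infinite `𝓑`-orbit.
But `k '' C` determines `k '' C'`, so this orbit is no larger than the finite `𝓑`-orbit of `C`.
-/

open Metric Set Topology

namespace UltraGen

variable {X : Type*} [MetricSpace X] [IsUltrametricDist X]

theorem dist_lt_of_lt {a b c : X} {r : ℝ} (h₁ : dist a b < r) (h₂ : dist b c < r) :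
    dist a c < r :=
  (dist_triangle_max a b c).trans_lt (max_lt h₁ h₂)

theorem dist_le_of_le {a b c : X} {r : ℝ} (h₁ : dist a b ≤ r) (h₂ : dist b c ≤ r) :
    dist a c ≤ r :=
  (dist_triangle_max a b c).trans (max_le h₁ h₂)

theorem ball_eq_of_dist_lt {a b : X} {r : ℝ} (h : dist a b < r) : ball a r = ball b r :=
  (IsUltrametricDist.ball_eq_of_mem (mem_ball.2 h)).symm

theorem dist_lt_of_ball_eq {X : Type*} [MetricSpace X] {a b : X} {r : ℝ} (hr : 0 < r)
    (h : ball a r = ball b r) :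
    dist a b < r :=
  mem_ball.1 (h ▸ mem_ball_self hr)

theorem mem_ballClass_ball_iff {x : X} {r : ℝ} (hr : 0 < r) {D : Set X} :
    D ∈ ballClass (ball x r) r ↔ ∃ h : X ≃ᵢ X, D = ball (h x) r ∧ dist x (h x) ≤ r := by
  constructor
  · rintro (rfl | ⟨-, ⟨g, rfl⟩, hd⟩)
    · exact ⟨1, rfl, by simpa using hr.le⟩
    · rw [g.image_ball] at hd ⊢
      refine ⟨g, rfl, ?_⟩
      by_contra! hlt
      refine hlt.not_ge ?_
      conv_rhs => rw [← hd]
      refine le_csInf (((nonempty_ball.2 hr).prod (nonempty_ball.2 hr)).image _) ?_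
      rintro _ ⟨⟨p, q⟩, ⟨hp, hq⟩, rfl⟩
      simp only [mem_ball] at hp hq ⊢
      by_contra! hpq
      have h₁ : dist x p < dist x (g x) := by rw [dist_comm]; exact hp.trans hlt
      exact lt_irrefl _ (dist_lt_of_lt (dist_lt_of_lt h₁ hpq) (hq.trans hlt))
  · rintro ⟨h, rfl, hle⟩
    rcases hle.lt_or_eq with hlt | heq
    · exact Or.inl (ball_eq_of_dist_lt hlt).symm
    · refine Or.inr ⟨⟨h x, rfl⟩, ⟨h, h.image_ball x r⟩, ?_⟩
      refine IsLeast.csInf_eq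
        ⟨⟨(x, h x), ⟨mem_ball_self hr, mem_ball_self hr⟩, heq⟩, ?_⟩
      rintro _ ⟨⟨p, q⟩, ⟨hp, hq⟩, rfl⟩
      simp only [mem_ball] at hp hq ⊢
      by_contra! hpq
      rw [dist_comm] at hp
      exact heq.not_lt (dist_lt_of_lt (dist_lt_of_lt hp hpq) hq)

section PermMap

variable {ι : Type*}

open Classical in
/-- The map carrying `ball (h i x) r` onto `ball (h (σ i) x) r` by `h (σ i) ∘ (h i)⁻¹`, and fixing
every point outside these balls.  It is meaningful when distinct indices give disjoint balls. -/
noncomputable def permMap (x : X) (r : ℝ) (h : ι → X ≃ᵢ X) (σ : Equiv.Perm ι) (p : X) : X :=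
  if hp : ∃ i, p ∈ ball (h i x) r then h (σ hp.choose) ((h hp.choose).symm p) else p

variable {x : X} {r : ℝ} {h : ι → X ≃ᵢ X}

theorem permMap_of_mem (hinj : ∀ i j, dist (h i x) (h j x) < r → i = j) (σ : Equiv.Perm ι)
    {p : X} {i : ι} (hp : p ∈ ball (h i x) r) :
    permMap x r h σ p = h (σ i) ((h i).symm p) := by
  have hex : ∃ i, p ∈ ball (h i x) r := ⟨i, hp⟩
  have hi : hex.choose = i := by
    refine hinj _ _ (dist_lt_of_lt ?_ (mem_ball.1 hp))
    rw [dist_comm]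
    exact hex.choose_spec
  rw [permMap, dif_pos hex, hi]

theorem permMap_of_notMem (σ : Equiv.Perm ι) {p : X} (hp : ∀ i, p ∉ ball (h i x) r) :
    permMap x r h σ p = p :=
  dif_neg fun ⟨i, hi⟩ => hp i hi

theorem permMap_mem (hinj : ∀ i j, dist (h i x) (h j x) < r → i = j) (σ : Equiv.Perm ι)
    {p : X} {i : ι} (hp : p ∈ ball (h i x) r) :
    permMap x r h σ p ∈ ball (h (σ i) x) r := by
  rw [permMap_of_mem hinj σ hp, mem_ball, (h (σ i)).dist_eq, ← (h i).dist_eq,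
    (h i).apply_symm_apply]
  exact hp

theorem permMap_permMap (hinj : ∀ i j, dist (h i x) (h j x) < r → i = j)
    {σ τ : Equiv.Perm ι} (hτ : ∀ i, τ (σ i) = i) (p : X) :
    permMap x r h τ (permMap x r h σ p) = p := by
  by_cases hp : ∃ i, p ∈ ball (h i x) r
  · obtain ⟨i, hi⟩ := hp
    rw [permMap_of_mem hinj τ (permMap_mem hinj σ hi), permMap_of_mem hinj σ hi, hτ]
    simp
  · push Not at hp
    rw [permMap_of_notMem σ hp, permMap_of_notMem τ hp]

theorem dist_permMap_self_le (hr : 0 < r) (hle : ∀ i, dist x (h i x) ≤ r)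
    (hinj : ∀ i j, dist (h i x) (h j x) < r → i = j) (σ : Equiv.Perm ι) (p : X) :
    dist (permMap x r h σ p) p ≤ r := by
  by_cases hp : ∃ i, p ∈ ball (h i x) r
  · obtain ⟨i, hi⟩ := hp
    have h₁ := (mem_ball.1 (permMap_mem hinj σ hi)).le
    refine dist_le_of_le h₁ (dist_le_of_le ?_ (dist_le_of_le (hle i) ?_))
    · rw [dist_comm]; exact hle _
    · rw [dist_comm]; exact (mem_ball.1 hi).le
  · push Not at hp
    rw [permMap_of_notMem σ hp, dist_self]
    exact hr.le

/-- At distance `≥ r`, displacements of at most `r` cannot increase the distance; two points at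
distance `< r` lie in the same ball, where the map is a restriction of an isometry, or are both
fixed. -/
theorem isometry_permMap (hr : 0 < r) (hle : ∀ i, dist x (h i x) ≤ r)
    (hinj : ∀ i j, dist (h i x) (h j x) < r → i = j) (σ : Equiv.Perm ι) :
    Isometry (permMap x r h σ) := by
  -- By symmetry with `σ⁻¹`, it suffices to show that no distance increases.
  have key : ∀ (σ : Equiv.Perm ι) (p q : X),
      dist (permMap x r h σ p) (permMap x r h σ q) ≤ dist p q := by
    intro σ p q
    have hmove := dist_permMap_self_le hr hle hinj σ
    by_cases hpq : r ≤ dist p q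
    · refine dist_le_of_le ((hmove p).trans hpq) (dist_le_of_le le_rfl ?_)
      rw [dist_comm]
      exact (hmove q).trans hpq
    · push Not at hpq
      by_cases hp : ∃ i, p ∈ ball (h i x) r
      · obtain ⟨i, hi⟩ := hp
        have hq : q ∈ ball (h i x) r := by
          rw [dist_comm] at hpq
          exact dist_lt_of_lt hpq hi
        rw [permMap_of_mem hinj σ hi, permMap_of_mem hinj σ hq, (h (σ i)).dist_eq,
          (h i).symm.dist_eq]
      · push Not at hp
        have hq : ∀ i, q ∉ ball (h i x) r := fun i hi => hp i (dist_lt_of_lt hpq hi)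
        rw [permMap_of_notMem σ hp, permMap_of_notMem σ hq]
  refine Isometry.of_dist_eq fun p q => le_antisymm (key σ p q) ?_
  have := key σ⁻¹ (permMap x r h σ p) (permMap x r h σ q)
  rwa [permMap_permMap hinj (by simp), permMap_permMap hinj (by simp)] at this

theorem exists_isometryEquiv_of_perm (hr : 0 < r) (hle : ∀ i, dist x (h i x) ≤ r)
    (hinj : ∀ i j, dist (h i x) (h j x) < r → i = j) (σ : Equiv.Perm ι) :
    ∃ g : X ≃ᵢ X, (∀ i, g '' ball (h i x) r = ball (h (σ i) x) r) ∧
      (∀ p, dist (g p) p ≤ r) ∧ ∀ p, (∀ i, p ∉ ball (h i x) r) → g p = p := by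
  refine ⟨IsometryEquiv.mk' (permMap x r h σ) (permMap x r h σ⁻¹)
    (permMap_permMap hinj (by simp)) (isometry_permMap hr hle hinj σ), fun i => ?_,
    dist_permMap_self_le hr hle hinj σ, fun p => permMap_of_notMem σ⟩
  rw [IsometryEquiv.image_ball]
  exact ball_eq_of_dist_lt (permMap_mem hinj σ (mem_ball_self hr))

end PermMap

/-- A ball not contained in any `r`-ball centred in `S` is stable under an isometry with
displacement at most `r` that is the identity off those balls. -/
theorem image_ball_eq_self {r s : ℝ} {b : X} {S : Set X} (g : X ≃ᵢ X)
    (hmove : ∀ p, dist (g p) p ≤ r) (hfix : ∀ p, (∀ c ∈ S, p ∉ ball c r) → g p = p)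
    (hB : ∀ c ∈ S, ¬ ball b s ⊆ ball c r) : g '' ball b s = ball b s := by
  rcases lt_or_ge r s with hrs | hsr
  · rw [g.image_ball]
    exact ball_eq_of_dist_lt ((hmove b).trans_lt hrs)
  · have hid : ∀ p ∈ ball b s, g p = p := by
      refine fun p hp => hfix p fun c hc hpc => hB c hc ?_
      rw [← ball_eq_of_dist_lt hp, ← ball_eq_of_dist_lt hpc]
      exact ball_subset_ball hsr
    rw [image_congr hid, image_id']

/-- The orbit of a ball under `τ(Id, 𝓑)` controls that of any larger ball with the same centre. -/
theorem finite_orb_ball {𝓑 : Set (Set X)} {x : X} {r s : ℝ} (hr : 0 < r) (hrs : r ≤ s)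
    (hfin : (orb 𝓑 (ball x r)).Finite) : (orb 𝓑 (ball x s)).Finite := by
  -- `k '' ball x s` is the `s`-neighbourhood of `k '' ball x r`.
  refine (hfin.image fun D => {p | ∃ q ∈ D, dist p q < s}).subset ?_
  rintro _ ⟨k, hk, rfl⟩
  refine ⟨_, ⟨k, hk, rfl⟩, ?_⟩
  simp only [k.image_ball]
  ext p
  simp only [mem_ofPred_eq, mem_ball]
  exact ⟨fun ⟨q, hq, hpq⟩ => dist_lt_of_lt hpq (hq.trans_le hrs),
    fun hp => ⟨k x, by simpa using hr, hp⟩⟩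

/-- Isometries in `τ(Id, 𝓑)` move the centre of an `r`-maximal non-extremal ball by at most `r`. -/
theorem dist_le_of_rMaxNonExtremal {𝓑 : Set (Set X)} {x : X} {r : ℝ}
    (hC : RMaxNonExtremalRad 𝓑 (ball x r) r) {g : X ≃ᵢ X}
    (hg : g ∈ tau (1 : X ≃ᵢ X) 𝓑) : dist x (g x) ≤ r := by
  obtain ⟨⟨hr, -⟩, hne, hmax⟩ := hC
  by_contra! hlt
  have hs : 0 < dist x (g x) := hr.trans hlt
  have hfin : (orb 𝓑 (ball x r)).Finite := not_infinite.1 fun hi => hne (Or.inl hi)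
  rcases hmax (ball x (dist x (g x))) _ hlt ⟨hs, x, rfl⟩ (ball_subset_ball hlt.le)
    with hinf | ⟨D, hD⟩
  · exact hinf (finite_orb_ball hr hlt.le hfin)
  · have h₁ : (1 : X ≃ᵢ X) '' ball x (dist x (g x)) = D :=
      mem_singleton_iff.1 (hD ▸ ⟨1, fun _ _ => rfl, rfl⟩)
    have h₂ : g '' ball x (dist x (g x)) = D := mem_singleton_iff.1 (hD ▸ ⟨g, hg, rfl⟩)
    rw [IsometryEquiv.image_ball] at h₁ h₂
    exact lt_irrefl _ (dist_lt_of_ball_eq hs (h₁.trans h₂.symm))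

end UltraGen

open UltraGen in
theorem orb_eq_ballClass_and_full_symmetric_action
    {X : Type*} [MetricSpace X] [IsUltrametricDist X]
    (𝓑 : Set (Set X)) (h𝓑 : FDFamily 𝓑)
    (C : Set X) (r : ℝ) (hC : RMaxNonExtremalRad 𝓑 C r)
    (𝓑' : Set (Set X)) (h𝓑' : FDFamily 𝓑') (hstr : Strengthens 𝓑' 𝓑)
    (hfree : ∀ D ∈ ballClass C r, ¬ ∃ B ∈ 𝓑', B ⊆ D) :
    orb 𝓑' C = ballClass C r ∧
    ∀ σ : Equiv.Perm (ballClass C r), ∃ g ∈ tau (1 : X ≃ᵢ X) 𝓑',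
      ∀ D : ballClass C r, g '' (D : Set X) = ((σ D : Set X)) := by
  have ⟨hr, x, hx⟩ := hC.1
  subst hx
  have hperm : ∀ σ : Equiv.Perm (ballClass (ball x r) r), ∃ g ∈ tau (1 : X ≃ᵢ X) 𝓑',
      ∀ D : ballClass (ball x r) r, g '' (D : Set X) = ((σ D : Set X)) := by
    intro σ
    choose h hD hle using
      fun D : ballClass (ball x r) r => (mem_ballClass_ball_iff hr).1 D.2
    have hinj : ∀ i j, dist (h i x) (h j x) < r → i = j := fun i j hij =>
      Subtype.ext ((hD i).trans ((ball_eq_of_dist_lt hij).trans (hD j).symm))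
    obtain ⟨g, hg, hmove, hfix⟩ := exists_isometryEquiv_of_perm hr hle hinj σ
    refine ⟨g, fun B hB => ?_, fun D => ?_⟩
    · obtain ⟨s, -, b, rfl⟩ := h𝓑'.2.1 B hB
      have : g '' ball b s = ball b s := by
        refine image_ball_eq_self (S := range fun i => h i x) g hmove
          (fun p hp => hfix p fun i => hp _ ⟨i, rfl⟩) ?_
        rintro _ ⟨i, rfl⟩ hsub
        exact hfree i i.2 ⟨_, hB, hsub.trans (hD i).symm.subset⟩
      rw [this]
      exact (image_id _).symm
    · rw [hD D, hD (σ D), hg]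
  refine ⟨Subset.antisymm ?_ fun D hD => ?_, hperm⟩
  · rintro _ ⟨g, hg, rfl⟩
    exact (mem_ballClass_ball_iff hr).2
      ⟨g, g.image_ball x r, dist_le_of_rMaxNonExtremal hC (hstr hg)⟩
  · classical
    obtain ⟨g, hg, hσ⟩ := hperm (Equiv.swap ⟨_, mem_insert _ _⟩ ⟨D, hD⟩)
    refine ⟨g, hg, (hσ ⟨_, mem_insert _ _⟩).trans ?_⟩
    rw [Equiv.swap_apply_left]
end

section
/- Let X be an ultrametric space which has the extremality property, and let Z ⊆ X be finite. Then there exists h ∈ Iso(X) such that for all x, x' ∈ Z and every g ∈ Iso(X) permuting Z: (1) d(x, h(x')) = d(g(x), h(g(x'))); (2) d(x, h(x')) = d(g(x), h(x')); and (3) if h(x) ∈ Z then h(x) = x. -/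
/-!
The heart of the matter is P. M. Neumann's lemma (`exists_smul_ne`): if finitely many points of a
`G`-set have infinite orbits, some element of `G` moves all of them off any given finite set. It is
applied to `Iso(X)` acting on the balls `ball z s` with `z ∈ Z` and `s` a nonzero distance between
points of `Z`. By extremality such a ball has an infinite orbit as soon as one isometry moves it, so
there is a single isometry `h` which maps no movable one among them onto any ball of this kind
(`exists_displacing`).

This `h` works. If `g` permutes `Z` and `s = dist x (g x) > 0`, then no
point of `h '' Z` lies within distance `< s` of `x` or of `g x`, so the strong triangle inequality
gives `dist x (h x') = dist (g x) (h x')`. Symmetrically `dist x (h x') = dist x (h (g x'))`, and the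
two equalities together give the first claim. Finally, if `h x = y ∈ Z` with `y ≠ x`, then `h` itself
moves `ball x (dist x y)` onto `ball y (dist x y)`, which is excluded.
-/

open Metric Set Topology

open scoped Pointwise in
/-- P. M. Neumann's lemma. The elements carrying `a` to `b` form a left coset of the stabilizer of
`a`, which has infinite index, and finitely many such cosets cannot cover the group. -/
theorem exists_smul_ne {G α : Type*} [Group G] [MulAction G α] {Γ Δ : Set α}
    (hΓ : Γ.Finite) (hΔ : Δ.Finite) (hinf : ∀ a ∈ Γ, (MulAction.orbit G a).Infinite) :
    ∃ g : G, ∀ a ∈ Γ, ∀ b ∈ Δ, g • a ≠ b := by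
  classical
  by_contra! hcon
  have hs : {p : α × α | p ∈ Γ ×ˢ Δ ∧ ∃ g : G, g • p.1 = p.2}.Finite :=
    (hΓ.prod hΔ).subset fun p hp => hp.1
  let t : α × α → G := fun p => if h : ∃ g : G, g • p.1 = p.2 then h.choose else 1
  have ht : ∀ p : α × α, (∃ g : G, g • p.1 = p.2) → t p • p.1 = p.2 := by
    intro p hp
    simp only [t, dif_pos hp]
    exact hp.choose_spec
  have hcov : ⋃ p ∈ hs.toFinset, t p • (MulAction.stabilizer G p.1 : Set G) = Set.univ := by
    refine Set.eq_univ_of_forall fun g => ?_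
    obtain ⟨a, ha, b, hb, hab⟩ := hcon g
    refine Set.mem_iUnion₂.2 ⟨(a, b), hs.mem_toFinset.2 ⟨⟨ha, hb⟩, g, hab⟩, ?_⟩
    rw [mem_leftCoset_iff]
    have h := ht (a, b) ⟨g, hab⟩
    simp only at h
    simp only [SetLike.mem_coe, MulAction.mem_stabilizer_iff, mul_smul, hab]
    rw [inv_smul_eq_iff, h]
  obtain ⟨p, hp, hfin⟩ := Subgroup.exists_finiteIndex_of_leftCoset_cover hcov
  have : Finite (MulAction.orbit G p.1) :=
    Finite.of_equiv _ (MulAction.orbitEquivQuotientStabilizer G p.1).symm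
  exact hinf p.1 (hs.mem_toFinset.1 hp).1.1 (Set.toFinite _)

/-- The action of the isometry group on subsets by taking images. -/
abbrev isoSetAction (X : Type*) [MetricSpace X] : MulAction (X ≃ᵢ X) (Set X) where
  smul g s := g '' s
  one_smul s := Set.image_id s
  mul_smul g h s := Set.image_comp g h s

open UltraGen in
/-- Some isometry `h` carries no movable ball `ball z s` onto `ball w s`, where `z, w ∈ Z` and
`s` is a nonzero distance in `Z`. Being movable and not being carried onto are expressed by distances
between centres. -/
theorem exists_displacing {X : Type*} [MetricSpace X] [IsUltrametricDist X]
    (hext : ExtremalityProperty X (∅ : Set (Set X))) (Z : Set X) (hZ : Z.Finite) :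
    ∃ h : X ≃ᵢ X, ∀ z ∈ Z, ∀ w ∈ Z, ∀ a ∈ Z, ∀ b ∈ Z, a ≠ b →
      (∃ g : X ≃ᵢ X, dist a b ≤ dist (g z) z) → dist a b ≤ dist (h z) w := by
  let := isoSetAction X
  let Δ : Set (Set X) :=
    (fun p : X × X × X => Metric.ball p.1 (dist p.2.1 p.2.2)) '' (Z ×ˢ Z ×ˢ Z)
  have hΔ : Δ.Finite := (hZ.prod (hZ.prod hZ)).image _
  obtain ⟨h, hh⟩ := exists_smul_ne (G := X ≃ᵢ X)
    (Γ := {C ∈ Δ | (MulAction.orbit (X ≃ᵢ X) C).Infinite})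
    (hΔ.subset fun _ hC => hC.1) hΔ fun _ hC => hC.2
  refine ⟨h, fun z hz w hw a ha b hb hab ⟨g, hg⟩ => ?_⟩
  by_contra! hlt
  have hpos : 0 < dist a b := dist_pos.2 hab
  have horb : orb (∅ : Set (Set X)) (Metric.ball z (dist a b)) =
      MulAction.orbit (X ≃ᵢ X) (Metric.ball z (dist a b)) := by
    ext D
    constructor
    · rintro ⟨k, -, rfl⟩
      exact ⟨k, rfl⟩
    · rintro ⟨k, rfl⟩
      exact ⟨k, fun _ hB => hB.elim, rfl⟩
  have hinf : (MulAction.orbit (X ≃ᵢ X) (Metric.ball z (dist a b))).Infinite := by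
    rcases hext _ ⟨_, hpos, z, rfl⟩ with hi | ⟨D, hD⟩
    · rwa [horb] at hi
    · exfalso
      rw [horb] at hD
      have h1 : (1 : X ≃ᵢ X) • Metric.ball z (dist a b) = D :=
        hD.subset (MulAction.mem_orbit _ _)
      have h2 : g • Metric.ball z (dist a b) = D := hD.subset (MulAction.mem_orbit _ _)
      rw [one_smul] at h1
      have h3 : g '' Metric.ball z (dist a b) = Metric.ball z (dist a b) := h2.trans h1.symm
      have h4 : g z ∈ Metric.ball z (dist a b) :=
        h3.subset (Set.mem_image_of_mem _ (Metric.mem_ball_self hpos))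
      exact absurd (Metric.mem_ball.1 h4) (not_lt.2 hg)
  refine hh _ ⟨⟨(z, a, b), ⟨hz, ha, hb⟩, rfl⟩, hinf⟩ _ ⟨(w, a, b), ⟨hw, ha, hb⟩, rfl⟩ ?_
  change h '' Metric.ball z (dist a b) = Metric.ball w (dist a b)
  rw [h.image_ball]
  exact (IsUltrametricDist.ball_eq_of_mem (Metric.mem_ball.2 hlt)).symm

/-- Two points are equidistant from any point lying outside both open balls whose radius is the
distance between them. -/
theorem dist_eq_of_far {X : Type*} [MetricSpace X] [IsUltrametricDist X] {x y p : X}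
    (hx : dist x y ≤ dist x p) (hy : dist x y ≤ dist y p) : dist x p = dist y p := by
  have h1 := dist_triangle_max x y p
  have h2 := dist_triangle_max y x p
  rw [dist_comm y x] at h2
  exact le_antisymm (h1.trans (max_le hy le_rfl)) (h2.trans (max_le hx le_rfl))

open UltraGen in
theorem exists_displacing_isometry
    {X : Type*} [MetricSpace X] [IsUltrametricDist X]
    (hext : ExtremalityProperty X (∅ : Set (Set X)))
    (Z : Set X) (hZ : Z.Finite) :
    ∃ h : X ≃ᵢ X,
      (∀ x ∈ Z, ∀ x' ∈ Z, ∀ g : X ≃ᵢ X, PermutesSet g Z →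
        dist x (h x') = dist (g x) (h (g x'))) ∧
      (∀ x ∈ Z, ∀ x' ∈ Z, ∀ g : X ≃ᵢ X, PermutesSet g Z →
        dist x (h x') = dist (g x) (h x')) ∧
      (∀ x ∈ Z, h x ∈ Z → h x = x) := by
  obtain ⟨h, hh⟩ := exists_displacing hext Z hZ
  have hmem : ∀ g : X ≃ᵢ X, PermutesSet g Z → ∀ x ∈ Z, g x ∈ Z := fun g hg x hx =>
    hg.subset (Set.mem_image_of_mem g hx)
  -- `h '' Z` avoids the ball around `x` of radius `dist x (g x)`.
  have far : ∀ g : X ≃ᵢ X, ∀ x ∈ Z, g x ∈ Z → ∀ x' ∈ Z, dist x (g x) ≤ dist x (h x') := by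
    intro g x hx hgx x' hx'
    rcases eq_or_ne x (g x) with he | hne
    · rw [← he, dist_self]
      exact dist_nonneg
    · by_contra! hlt
      rw [dist_comm x (h x')] at hlt
      refine absurd (hh x' hx' x hx x hx (g x) hgx hne ?_) (not_le.2 hlt)
      -- The ball around `x'` is moved by `h`, or else it contains `x` and is moved by `g`.
      by_contra! hno
      have h1 := hno h
      have h2 := hno g
      have h3 : dist x x' < dist x (g x) :=
        (dist_triangle_max x (h x') x').trans_lt (max_lt (by rwa [dist_comm x]) h1)
      have h4 : dist x (g x) ≤ max (dist x x') (max (dist x' (g x')) (dist (g x') (g x))) :=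
        (dist_triangle_max x x' (g x)).trans
          (max_le_max le_rfl (dist_triangle_max x' (g x') (g x)))
      rw [g.dist_eq, dist_comm x' x, dist_comm x' (g x')] at h4
      exact absurd h4 (not_le.2 (max_lt h3 (max_lt h2 h3)))
  have hsnd : ∀ x ∈ Z, ∀ x' ∈ Z, ∀ g : X ≃ᵢ X, PermutesSet g Z →
      dist x (h x') = dist (g x) (h x') := by
    intro x hx x' hx' g hg
    refine dist_eq_of_far (far g x hx (hmem g hg x hx) x' hx') ?_
    have := far g⁻¹ (g x) (hmem g hg x hx) (by simpa using hx) x' hx'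
    rwa [IsometryEquiv.inv_apply_self, dist_comm (g x) x] at this
  refine ⟨h, fun x hx x' hx' g hg => ?_, hsnd, fun x hx hhx => ?_⟩
  · rw [← hsnd x hx (g x') (hmem g hg x' hx') g hg, dist_comm x, dist_comm x]
    have hgx' := hmem g hg x' hx'
    rcases eq_or_ne x' (g x') with he | hne
    · rw [← he]
    · refine dist_eq_of_far ?_ ?_ <;> rw [h.dist_eq]
      · exact hh x' hx' x hx x' hx' (g x') hgx' hne ⟨g, (dist_comm _ _).le⟩
      · refine hh (g x') hgx' x hx x' hx' (g x') hgx' hne ⟨g⁻¹, ?_⟩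
        rw [IsometryEquiv.inv_apply_self]
  · by_contra hne
    have := hh x hx (h x) hhx (h x) hhx x hx hne ⟨h, le_rfl⟩
    rw [dist_self] at this
    exact hne (dist_le_zero.1 this)
end

section
/- Let X be an ultrametric space, let Z ⊆ X be finite, and let 𝓑 be an FD family such that X has the 𝓑-extremality property. Then there exists h ∈ τ(Id,𝓑) such that for all x, x' ∈ Z and all g, g' ∈ Iso(X) which permute both Z and 𝓑 and satisfy τ(g,𝓑) = τ(g',𝓑): (1) d(x, h(x')) = d(g(x), h(g'(x'))); and (2) if h(x) ∈ Z then h(x) = x. -/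
/-!
Let `H = τ(Id, 𝓑)`, a subgroup of `Iso(X)`. Isometries permuting `𝓑` normalize `H`, and
`τ(g, 𝓑) = τ(g', 𝓑)` means `g⁻¹ g' ∈ H`. The isometry `h ∈ H` is built so that, for `x, x' ∈ Z`,
`d(x, h x') = max (d(x, x')) (ρ x')`, where `ρ : X → ℝ` is invariant under every isometry that
normalizes `H` and permutes `Z`, and `d(x', k x') ≤ ρ x'` whenever `k ∈ H` permutes `Z`.
The invariance (1) follows at once, and (2) follows by taking `x := h x'` in the formula.

The value `ρ x` (`rad`) depends on whether the displacements `d(x, k x)`, `k ∈ H`, have a maximum.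

* If they do, `ρ x` is that maximum. When it is positive, the ball `B(x, ρ x)` is moved by `H`, so by
  extremality its orbit is infinite and its stabilizer has infinite index in `H`. By B. H. Neumann's
  lemma `H` is not covered by finitely many cosets of such stabilizers, and so some `h₀ ∈ H`
  has `d(x, h₀ x') ≥ ρ x'` for all `x, x' ∈ Z` of this kind (`exists_neumann`).
* If they do not, `x` lies in an `H`-invariant cluster of points `y` with `d(x, y) < d(x, k x)` for
  some `k ∈ H`, and `ρ x` is a displacement of `x` exceeding `d(x, w)` for every `w ∈ Z` in the
  cluster. The set of admissible values (`radSet`) is constant on the points of `Z` in a cluster and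
  invariant under the relevant isometries, so choosing from that set makes `ρ` invariant as well.

Any choice of elements of `H`, one for each cluster and one for the rest of the space, glues to
an isometry (`exists_glue`). On each cluster one takes an element displacing its points of `Z` by
`ρ`, and elsewhere `h₀`.
-/


open Metric Set Topology

namespace UltraGen

section Displacement

variable {X : Type*} [MetricSpace X]

/-! ### Displacements and clusters -/

/-- The displacements `d(x, h x)`, `h ∈ H`, have no maximum. -/
def NoMax (H : Subgroup (X ≃ᵢ X)) (x : X) : Prop :=
  ∀ h ∈ H, ∃ k ∈ H, dist x (h x) < dist x (k x)

/-- `y` is closer to `x` than some `H`-translate of `x`. The points `y` with `Near H x y` form the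
cluster of `x`; this notion is only of interest when `NoMax H x`. -/
def Near (H : Subgroup (X ≃ᵢ X)) (x y : X) : Prop :=
  ∃ h ∈ H, dist x y < dist x (h x)

/-- The admissible values for the displacement of `x`: displacements exceeding the distance from `x`
to each point of `Z` in its cluster, and maximal if a maximum exists. -/
def radSet (H : Subgroup (X ≃ᵢ X)) (Z : Set X) (x : X) : Set ℝ :=
  {r | (∃ h ∈ H, dist x (h x) = r) ∧ (∀ w ∈ Z, Near H x w → dist x w < r) ∧
    (¬ NoMax H x → ∀ h ∈ H, dist x (h x) ≤ r)}

/-- A chosen admissible displacement of `x`. It depends on `x` only through the set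
`radSet H Z x`. -/
noncomputable def rad (H : Subgroup (X ≃ᵢ X)) (Z : Set X) (x : X) : ℝ :=
  Classical.epsilon (fun r => r ∈ radSet H Z x)

lemma NoMax.near_smul {H : Subgroup (X ≃ᵢ X)} {x : X} (hU : NoMax H x) {h : X ≃ᵢ X}
    (hh : h ∈ H) : Near H x (h x) := hU h hh

lemma radSet_nonempty (H : Subgroup (X ≃ᵢ X)) {Z : Set X} (hZ : Z.Finite) (x : X) :
    (radSet H Z x).Nonempty := by
  by_cases hU : NoMax H x
  · have key : ∃ h ∈ H, ∀ w ∈ Z, Near H x w → dist x w < dist x (h x) := by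
      induction Z, hZ using Set.Finite.induction_on with
      | empty => exact ⟨1, H.one_mem, by simp⟩
      | @insert a s _ _ ih =>
        obtain ⟨h, hh, hw⟩ := ih
        by_cases hn : Near H x a
        · obtain ⟨k, hk, hlt⟩ := hn
          rcases le_total (dist x (h x)) (dist x (k x)) with hle | hle
          · refine ⟨k, hk, ?_⟩
            rintro w (rfl | hws) hnw
            · exact hlt
            · exact (hw w hws hnw).trans_le hle
          · refine ⟨h, hh, ?_⟩
            rintro w (rfl | hws) hnw
            · exact hlt.trans_le hle
            · exact hw w hws hnw
        · refine ⟨h, hh, ?_⟩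
          rintro w (rfl | hws) hnw
          · exact absurd hnw hn
          · exact hw w hws hnw
    obtain ⟨h, hh, hw⟩ := key
    exact ⟨_, ⟨h, hh, rfl⟩, hw, fun h' => absurd hU h'⟩
  · have hU' := hU
    unfold NoMax at hU'
    push Not at hU'
    obtain ⟨h, hh, hmax⟩ := hU'
    refine ⟨_, ⟨h, hh, rfl⟩, ?_, fun _ => hmax⟩
    rintro w - ⟨k, hk, hlt⟩
    exact hlt.trans_le (hmax k hk)

lemma rad_mem (H : Subgroup (X ≃ᵢ X)) {Z : Set X} (hZ : Z.Finite) (x : X) :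
    rad H Z x ∈ radSet H Z x :=
  Classical.epsilon_spec (p := fun r => r ∈ radSet H Z x) (radSet_nonempty H hZ x)

/-- The displacement of `x` by an element of `H` returning it to `Z` does not exceed `rad`. -/
lemma disp_le_rad {H : Subgroup (X ≃ᵢ X)} {Z : Set X} (hZ : Z.Finite) {x : X} {k : X ≃ᵢ X}
    (hk : k ∈ H) (hkx : k x ∈ Z) : dist x (k x) ≤ rad H Z x := by
  obtain ⟨-, h2, h3⟩ := rad_mem H hZ x
  by_cases hU : NoMax H x
  · exact (h2 _ hkx (hU.near_smul hk)).le
  · exact h3 hU k hk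

/-! ### Invariance under isometries normalizing `H` -/

/-- `g` permutes `Z` and normalizes `H`. -/
def Compat (H : Subgroup (X ≃ᵢ X)) (Z : Set X) (g : X ≃ᵢ X) : Prop :=
  (∀ x, g x ∈ Z ↔ x ∈ Z) ∧ ∀ h, g * h * g⁻¹ ∈ H ↔ h ∈ H

lemma dist_conj (g h : X ≃ᵢ X) (x : X) :
    dist (g x) ((g * h * g⁻¹) (g x)) = dist x (h x) := by
  simp [IsometryEquiv.mul_apply, IsometryEquiv.inv_apply_self, g.dist_eq]

lemma Compat.forall_iff {H : Subgroup (X ≃ᵢ X)} {Z : Set X} {g : X ≃ᵢ X} (hg : Compat H Z g)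
    (x : X) (P : ℝ → Prop) :
    (∀ h ∈ H, P (dist (g x) (h (g x)))) ↔ ∀ h ∈ H, P (dist x (h x)) := by
  constructor
  · intro H1 h hh
    have := H1 _ ((hg.2 h).2 hh)
    rwa [dist_conj] at this
  · intro H1 h hh
    have e : h = g * (g⁻¹ * h * g) * g⁻¹ := by group
    have := H1 (g⁻¹ * h * g) ((hg.2 _).1 (e ▸ hh))
    rw [e, dist_conj]
    exact this

lemma Compat.exists_iff {H : Subgroup (X ≃ᵢ X)} {Z : Set X} {g : X ≃ᵢ X} (hg : Compat H Z g)
    (x : X) (P : ℝ → Prop) :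
    (∃ h ∈ H, P (dist (g x) (h (g x)))) ↔ ∃ h ∈ H, P (dist x (h x)) := by
  have := hg.forall_iff x (fun r => ¬ P r)
  rw [← not_iff_not]
  push Not
  exact this

lemma Compat.noMax_iff {H : Subgroup (X ≃ᵢ X)} {Z : Set X} {g : X ≃ᵢ X} (hg : Compat H Z g)
    (x : X) : NoMax H (g x) ↔ NoMax H x := by
  unfold NoMax
  rw [hg.forall_iff x (fun r => ∃ h' ∈ H, r < dist (g x) (h' (g x)))]
  refine forall₂_congr fun h _ => ?_
  exact hg.exists_iff x (fun r => dist x (h x) < r)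

lemma Compat.near_iff {H : Subgroup (X ≃ᵢ X)} {Z : Set X} {g : X ≃ᵢ X} (hg : Compat H Z g)
    (x y : X) : Near H (g x) (g y) ↔ Near H x y := by
  unfold Near
  rw [g.dist_eq]
  exact hg.exists_iff x (fun r => dist x y < r)

lemma Compat.rad_eq {H : Subgroup (X ≃ᵢ X)} {Z : Set X} {g : X ≃ᵢ X} (hg : Compat H Z g)
    (x : X) : rad H Z (g x) = rad H Z x := by
  have : radSet H Z (g x) = radSet H Z x := by
    ext r
    unfold radSet
    simp only [Set.mem_ofPred_eq]
    rw [hg.exists_iff x (fun s => s = r), hg.noMax_iff, hg.forall_iff x (fun s => s ≤ r)]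
    refine and_congr_right fun _ => and_congr_left fun _ => ?_
    rw [← g.toEquiv.forall_congr_right]
    refine forall_congr' fun w => ?_
    change (g w ∈ Z → Near H (g x) (g w) → dist (g x) (g w) < r) ↔ _
    rw [hg.1, hg.near_iff, g.dist_eq]
  unfold rad
  rw [this]

/-! ### Stabilizers of balls -/

/-- The stabilizer in `H` of the ball `B(x, r)`. -/
def ballStab (H : Subgroup (X ≃ᵢ X)) (x : X) (r : ℝ) : Subgroup H where
  carrier := {h | (h : X ≃ᵢ X) '' ball x r = ball x r}
  one_mem' := by simp
  mul_mem' := by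
    intro a b ha hb
    simp only [Set.mem_ofPred_eq] at ha hb ⊢
    have : ((a * b : H) : X ≃ᵢ X) '' ball x r = (a : X ≃ᵢ X) '' ((b : X ≃ᵢ X) '' ball x r) := by
      rw [Set.image_image]; rfl
    rw [this, hb, ha]
  inv_mem' := by
    intro a ha
    simp only [Set.mem_ofPred_eq] at ha ⊢
    conv_lhs => rw [← ha]
    rw [Set.image_image]
    simp [IsometryEquiv.inv_apply_self]

lemma orbit_finite {H : Subgroup (X ≃ᵢ X)} {x : X} {r : ℝ} (hf : (ballStab H x r).FiniteIndex) :
    ((fun g : X ≃ᵢ X => g '' ball x r) '' (H : Set (X ≃ᵢ X))).Finite := by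
  have : Finite (H ⧸ ballStab H x r) := Subgroup.finite_quotient_of_finiteIndex
  let F : H ⧸ ballStab H x r → Set X :=
    Quotient.lift (fun h : H => (h : X ≃ᵢ X) '' ball x r) (by
      intro a b hab
      have h1 : a⁻¹ * b ∈ ballStab H x r := QuotientGroup.leftRel_apply.1 hab
      have h2 : ((a⁻¹ * b : H) : X ≃ᵢ X) '' ball x r = ball x r := h1
      change (a : X ≃ᵢ X) '' ball x r = (b : X ≃ᵢ X) '' ball x r
      conv_lhs => rw [← h2]
      rw [Set.image_image]
      simp [IsometryEquiv.mul_apply, IsometryEquiv.apply_inv_self])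
  refine (Set.finite_range F).subset ?_
  rintro _ ⟨h, hh, rfl⟩
  exact ⟨((⟨h, hh⟩ : H) : H ⧸ ballStab H x r), rfl⟩

/-! ### Ultrametric properties of clusters -/

section Ultra

variable [IsUltrametricDist X]

lemma um (a b c : X) : dist a c ≤ dist a b ∨ dist a c ≤ dist b c :=
  le_max_iff.1 (dist_triangle_max a b c)

lemma dist_eq_of_lt {a b c : X} (h : dist a b < dist b c) : dist a c = dist b c := by
  have h1 := um a b c
  have h2 := um b a c
  rw [dist_comm b a] at h2
  grind

lemma disp_eq {x y : X} {h : X ≃ᵢ X} (hlt : dist x y < dist x (h x)) :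
    dist y (h y) = dist x (h x) := by
  have h1 : dist y (h x) = dist x (h x) := dist_eq_of_lt (by rwa [dist_comm y x])
  have h2 : dist (h y) y = dist (h x) y :=
    dist_eq_of_lt (by rw [h.dist_eq, dist_comm y x, dist_comm (h x) y, h1]; exact hlt)
  rw [dist_comm, h2, dist_comm, h1]

lemma Near.symm {H : Subgroup (X ≃ᵢ X)} {x y : X} (h : Near H x y) : Near H y x := by
  obtain ⟨k, hk, hlt⟩ := h
  exact ⟨k, hk, by rw [disp_eq hlt, dist_comm]; exact hlt⟩

lemma Near.trans {H : Subgroup (X ≃ᵢ X)} {x y z : X} (h : Near H x y) (h' : Near H y z) :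
    Near H x z := by
  obtain ⟨k, hk, hlt⟩ := h
  obtain ⟨l, hl, hlt'⟩ := h'
  rcases um x y z with h1 | h1
  · exact ⟨k, hk, h1.trans_lt hlt⟩
  · by_cases h2 : dist x y < dist y (l y)
    · refine ⟨l, hl, ?_⟩
      rw [disp_eq (x := y) (y := x) (by rwa [dist_comm])]
      exact h1.trans_lt hlt'
    · exact ⟨k, hk, by linarith⟩

lemma NoMax.of_near {H : Subgroup (X ≃ᵢ X)} {x y : X} (hU : NoMax H x) (h : Near H x y) :
    NoMax H y := by
  obtain ⟨k, hk, hlt⟩ := h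
  intro l hl
  by_cases h1 : dist x y < dist x (l x)
  · obtain ⟨m, hm, hlm⟩ := hU l hl
    exact ⟨m, hm, by rw [disp_eq h1, disp_eq (h1.trans hlm)]; exact hlm⟩
  · refine ⟨k, hk, ?_⟩
    rw [disp_eq hlt]
    have h2 := um y x (l y)
    have h3 := um x (l x) (l y)
    rw [l.dist_eq] at h3
    rw [dist_comm y x] at h2
    grind

/-- Points of `Z` in a common cluster are displaced by the same chosen amount. -/
lemma rad_eq_of_near {H : Subgroup (X ≃ᵢ X)} {Z : Set X} {x y : X} (hx : x ∈ Z) (hy : y ∈ Z)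
    (hU : NoMax H x) (hn : Near H x y) : rad H Z x = rad H Z y := by
  have key : ∀ x ∈ Z, ∀ y ∈ Z, NoMax H x → Near H x y → radSet H Z x ⊆ radSet H Z y := by
    rintro x hx y hy hU hn r ⟨⟨h, hh, rfl⟩, h2, -⟩
    have hxy := h2 y hy hn
    refine ⟨⟨h, hh, disp_eq hxy⟩, fun w hw hnw => ?_, fun h' => absurd (hU.of_near hn) h'⟩
    have h3 := h2 w hw (hn.trans hnw)
    have h4 := um y x w
    rw [dist_comm y x] at h4
    grind
  have : radSet H Z x = radSet H Z y :=
    (key x hx y hy hU hn).antisymm (key y hy x hx (hU.of_near hn) hn.symm)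
  unfold rad
  rw [this]

/-! ### Gluing -/

/-- A choice `c` of elements of `H` that is constant on `H`-orbits, and that changes only between
points whose distance exceeds all displacements of one of them, glues to an isometry. -/
lemma exists_glue (H : Subgroup (X ≃ᵢ X)) (c : X → X ≃ᵢ X) (hc : ∀ x, c x ∈ H)
    (hinv : ∀ x, ∀ h ∈ H, c (h x) = c x)
    (hsep : ∀ x y, c x = c y ∨ (∀ h ∈ H, dist x (h x) < dist x y) ∨
      (∀ h ∈ H, dist y (h y) < dist x y)) :
    ∃ f : X ≃ᵢ X, ∀ x, f x = c x x := by
  have aux : ∀ x y, (∀ h ∈ H, dist x (h x) < dist x y) →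
      dist (c x x) (c y y) = dist x y := by
    intro x y hx
    have h1 : dist (c x x) (c y y) = dist (((c y)⁻¹ * c x) x) y := by
      conv_rhs => rw [← (c y).dist_eq]
      simp [IsometryEquiv.mul_apply, IsometryEquiv.apply_inv_self]
    rw [h1]
    have := hx _ (H.mul_mem (H.inv_mem (hc y)) (hc x))
    exact dist_eq_of_lt (by rwa [dist_comm])
  have hiso : Isometry (fun x => c x x) := by
    refine Isometry.of_dist_eq fun x y => ?_
    rcases hsep x y with h | h | h
    · rw [h, (c y).dist_eq]
    · exact aux x y h
    · rw [dist_comm, aux y x (by simpa only [dist_comm x y] using h), dist_comm]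
  refine ⟨IsometryEquiv.mk' (fun x => c x x) (fun x => (c x)⁻¹ x) (fun x => ?_) hiso,
    fun x => rfl⟩
  rw [hinv x _ (H.inv_mem (hc x)), IsometryEquiv.apply_inv_self]

/-! ### Avoiding finitely many cosets -/

lemma mem_ballStab {H : Subgroup (X ≃ᵢ X)} {x : X} {r : ℝ} {h : H}
    (hlt : dist ((h : X ≃ᵢ X) x) x < r) : h ∈ ballStab H x r := by
  change (h : X ≃ᵢ X) '' ball x r = ball x r
  rw [IsometryEquiv.image_ball]
  exact (IsUltrametricDist.ball_eq_of_mem (mem_ball.2 hlt)).symm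

open scoped Pointwise in
/-- If balls moved by `H` have infinite orbits, some `h ∈ H` moves all points of `Z` with a maximal
displacement at least that far from every point of `Z`. -/
lemma exists_neumann (H : Subgroup (X ≃ᵢ X)) {Z : Set X} (hZ : Z.Finite)
    (hE : ∀ (x : X) (r : ℝ), 0 < r → (∃ h ∈ H, r ≤ dist x (h x)) →
      ((fun g : X ≃ᵢ X => g '' ball x r) '' (H : Set (X ≃ᵢ X))).Infinite) :
    ∃ h ∈ H, ∀ x ∈ Z, ∀ x' ∈ Z, ¬ NoMax H x' → rad H Z x' ≤ dist x (h x') := by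
  classical
  by_contra hcon
  push Not at hcon
  let bad : Set (X × X) := {p | p ∈ Z ×ˢ Z ∧
    ∃ h : H, dist p.1 ((h : X ≃ᵢ X) p.2) < rad H Z p.2}
  have hbad : bad.Finite := (hZ.prod hZ).subset fun p hp => hp.1
  -- For a bad pair, the elements violating the inequality lie in one coset of the stabilizer
  -- of the ball around its second point; `k p` represents that coset.
  have hrep : ∀ p : X × X, ∃ k : H, p ∈ bad → dist p.1 ((k : X ≃ᵢ X) p.2) < rad H Z p.2 := by
    intro p
    by_cases hp : p ∈ bad
    · obtain ⟨k, hk⟩ := hp.2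
      exact ⟨k, fun _ => hk⟩
    · exact ⟨1, fun h => absurd h hp⟩
  choose k hk using hrep
  have hcov : ⋃ p ∈ hbad.toFinset,
      k p • (ballStab H p.2 (rad H Z p.2) : Set H) = Set.univ := by
    refine Set.eq_univ_of_forall fun h => ?_
    obtain ⟨x, hx, x', hx', -, hlt⟩ := hcon h h.2
    have hp : (x, x') ∈ bad := ⟨⟨hx, hx'⟩, h, hlt⟩
    refine Set.mem_biUnion (x := (x, x')) (by simpa using hp) ?_
    rw [Set.mem_smul_set_iff_inv_smul_mem]
    refine mem_ballStab ?_
    have h1 := hk _ hp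
    have h2 : dist (((k (x, x') : X ≃ᵢ X)⁻¹ * h) x') x'
        = dist ((h : X ≃ᵢ X) x') ((k (x, x') : X ≃ᵢ X) x') := by
      conv_lhs => rw [← (k (x, x') : X ≃ᵢ X).dist_eq]
      simp [IsometryEquiv.mul_apply, IsometryEquiv.apply_inv_self]
    change dist (((k (x, x') : X ≃ᵢ X)⁻¹ * h) x') x' < _
    rw [h2]
    have h3 := um (h.1 x') x (k (x, x') |>.1 x')
    rw [dist_comm (h.1 x') x] at h3
    simp only at h1 ⊢
    grind
  obtain ⟨p, hp, hfin⟩ := Subgroup.exists_finiteIndex_of_leftCoset_cover hcov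
  have hp' : p ∈ bad := by simpa using hp
  obtain ⟨⟨h, hh, he⟩, -⟩ := rad_mem H hZ p.2
  have hpos : 0 < rad H Z p.2 := dist_nonneg.trans_lt (hk p hp')
  exact hE p.2 _ hpos ⟨h, hh, he.ge⟩ (orbit_finite hfin)

/-! ### The displacing isometry -/

/-- The isometry is glued from elements of `H`, which is recorded in the first conclusion. -/
lemma exists_displacing (H : Subgroup (X ≃ᵢ X)) {Z : Set X} (hZ : Z.Finite)
    (hE : ∀ (x : X) (r : ℝ), 0 < r → (∃ h ∈ H, r ≤ dist x (h x)) →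
      ((fun g : X ≃ᵢ X => g '' ball x r) '' (H : Set (X ≃ᵢ X))).Infinite) :
    ∃ f : X ≃ᵢ X, (∀ x, (∃ h ∈ H, f x = h x) ∧ ∃ h ∈ H, f⁻¹ x = h x) ∧
      ∀ x ∈ Z, ∀ x' ∈ Z, dist x (f x') = max (dist x x') (rad H Z x') := by
  classical
  obtain ⟨h₀, hh₀, hfar⟩ := exists_neumann H hZ hE
  -- The elements admissible on the cluster of `x`.
  let T : X → Set (X ≃ᵢ X) := fun x =>
    {h | h ∈ H ∧ ∀ z ∈ Z, Near H x z → dist z (h z) = rad H Z z}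
  have hT : ∀ x, NoMax H x → ∃ h, h ∈ T x := by
    intro x hU
    by_cases hz : ∃ z ∈ Z, Near H x z
    · obtain ⟨z, hz, hn⟩ := hz
      obtain ⟨⟨h, hh, he⟩, h2, -⟩ := rad_mem H hZ z
      refine ⟨h, hh, fun w hw hnw => ?_⟩
      have hzw := hn.symm.trans hnw
      rw [← rad_eq_of_near hz hw (hU.of_near hn) hzw, ← he]
      refine disp_eq ?_
      rw [he]
      exact h2 w hw hzw
    · exact ⟨1, H.one_mem, fun z hz' hn => absurd ⟨z, hz', hn⟩ hz⟩
  have hTeq : ∀ x y, Near H x y → T x = T y := by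
    intro x y hn
    ext h
    refine and_congr_right fun _ => forall₂_congr fun z _ => ?_
    rw [show Near H x z ↔ Near H y z from ⟨hn.symm.trans, hn.trans⟩]
  let c : X → X ≃ᵢ X := fun x =>
    if NoMax H x then @Classical.epsilon _ ⟨1⟩ (fun h => h ∈ T x) else h₀
  have hcT : ∀ x, NoMax H x → c x ∈ T x := by
    intro x hU
    simp only [c, if_pos hU]
    exact Classical.epsilon_spec (p := fun h => h ∈ T x) (hT x hU)
  have hc0 : ∀ x, ¬ NoMax H x → c x = h₀ := fun x hU => by simp only [c, if_neg hU]
  have hcH : ∀ x, c x ∈ H := by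
    intro x
    by_cases hU : NoMax H x
    · exact (hcT x hU).1
    · rw [hc0 x hU]; exact hh₀
  have hceq : ∀ x y, NoMax H x → Near H x y → c x = c y := by
    intro x y hU hn
    simp only [c, if_pos hU, if_pos (hU.of_near hn), hTeq x y hn]
  have hfarU : ∀ x y, NoMax H x → ¬ Near H x y → ∀ h ∈ H, dist x (h x) < dist x y := by
    intro x y hU hn h hh
    obtain ⟨l, hl, hlt⟩ := hU h hh
    refine hlt.trans_le (not_lt.1 fun h' => hn ⟨l, hl, h'⟩)
  have hinv : ∀ x, ∀ h ∈ H, c (h x) = c x := by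
    intro x h hh
    by_cases hU : NoMax H x
    · exact (hceq x _ hU (hU.near_smul hh)).symm
    · have hU' : ¬ NoMax H (h x) := by
        intro hU'
        have := hU'.near_smul (H.inv_mem hh)
        rw [IsometryEquiv.inv_apply_self] at this
        exact hU (hU'.of_near this)
      rw [hc0 _ hU, hc0 _ hU']
  obtain ⟨f, hf⟩ := exists_glue H c hcH hinv (by
    intro x y
    by_cases hx : NoMax H x
    · by_cases hn : Near H x y
      · exact Or.inl (hceq x y hx hn)
      · exact Or.inr (Or.inl (hfarU x y hx hn))
    · by_cases hy : NoMax H y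
      · by_cases hn : Near H y x
        · exact Or.inl (hceq y x hy hn).symm
        · refine Or.inr (Or.inr ?_)
          rw [dist_comm]
          exact hfarU y x hy hn
      · exact Or.inl (by rw [hc0 x hx, hc0 y hy]))
  refine ⟨f, fun x => ⟨⟨c x, hcH x, hf x⟩, (c x)⁻¹, H.inv_mem (hcH x), ?_⟩, ?_⟩
  · apply f.injective
    rw [IsometryEquiv.apply_inv_self, hf, hinv x _ (H.inv_mem (hcH x)),
      IsometryEquiv.apply_inv_self]
  intro x hx x' hx'
  rw [hf]
  obtain ⟨-, h2, h3⟩ := rad_mem H hZ x'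
  by_cases hU : NoMax H x'
  · by_cases hn : Near H x' x
    · have hd := (hcT x' hU).2 x' hx' (hn.trans hn.symm)
      -- In the cluster, the displacement of `x'` exceeds its distance to `x`.
      have hlt := h2 x hx hn
      rw [dist_comm x' x] at hlt
      rw [max_eq_right hlt.le, ← hd]
      exact dist_eq_of_lt (by rwa [hd])
    · -- Outside the cluster, every displacement of `x'` is less than its distance to `x`.
      have hd := hfarU x' x hU hn _ (hcH x')
      obtain ⟨⟨l, hl, he⟩, -⟩ := rad_mem H hZ x'
      have hr := hfarU x' x hU hn l hl
      rw [he, dist_comm x' x] at hr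
      rw [max_eq_left hr.le, dist_comm, dist_comm x x']
      exact dist_eq_of_lt (by rwa [dist_comm])
  · rw [hc0 x' hU]
    have hle := h3 hU h₀ hh₀
    have hge := hfar x hx x' hx' hU
    rcases lt_or_ge (rad H Z x') (dist x x') with hlt | hge'
    · rw [max_eq_left hlt.le, dist_comm, dist_comm x x']
      exact dist_eq_of_lt (by rw [dist_comm, dist_comm x' x]; exact hle.trans_lt hlt)
    · rw [max_eq_right hge']
      have := um x x' (h₀ x')
      refine le_antisymm ?_ hge
      grind

end Ultra

/-! ### The stabilizer of an FD family -/

/-- `τ(Id, 𝓑)` as a subgroup. -/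
def tauSubgroup (𝓑 : Set (Set X)) : Subgroup (X ≃ᵢ X) where
  carrier := tau 1 𝓑
  one_mem' := fun _ _ => rfl
  mul_mem' := by
    intro a b ha hb B hB
    have h1 : a '' B = B := by simpa using ha B hB
    have h2 : b '' B = B := by simpa using hb B hB
    have : (a * b) '' B = a '' (b '' B) := by rw [Set.image_image]; rfl
    rw [this, h2, h1]
    simp
  inv_mem' := by
    intro a ha B hB
    have h1 : a '' B = B := by simpa using ha B hB
    conv_lhs => rw [← h1]
    rw [Set.image_image]
    simp [IsometryEquiv.inv_apply_self]

lemma mem_tauSubgroup {𝓑 : Set (Set X)} {h : X ≃ᵢ X} :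
    h ∈ tauSubgroup 𝓑 ↔ ∀ B ∈ 𝓑, h '' B = B := by
  change (∀ B ∈ 𝓑, h '' B = (1 : X ≃ᵢ X) '' B) ↔ _
  simp

lemma compat_of_permutes {𝓑 : Set (Set X)} {Z : Set X} {g : X ≃ᵢ X} (hg : PermutesSet g Z)
    (hg' : PermutesFam g 𝓑) : Compat (tauSubgroup 𝓑) Z g := by
  constructor
  · intro x
    conv_lhs => rw [← hg]
    exact g.injective.mem_set_image
  · intro h
    rw [mem_tauSubgroup, mem_tauSubgroup]
    have key : ∀ B : Set X, (g * h * g⁻¹) '' (g '' B) = g '' (h '' B) := by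
      intro B
      rw [Set.image_image, Set.image_image]
      simp [IsometryEquiv.mul_apply, IsometryEquiv.inv_apply_self]
    constructor
    · intro H1 B hB
      have h1 := H1 (g '' B) (by rw [← hg']; exact ⟨B, hB, rfl⟩)
      rw [key] at h1
      exact g.injective.image_injective h1
    · intro H1 B hB
      rw [← hg'] at hB
      obtain ⟨B', hB', rfl⟩ := hB
      change (g * h * g⁻¹) '' (g '' B') = g '' B'
      rw [key, H1 B' hB']

/-- Extremality gives infinite orbits of the balls moved by `τ(Id, 𝓑)`. -/
lemma orbit_infinite {𝓑 : Set (Set X)} (hext : ExtremalityProperty X 𝓑) (x : X) (r : ℝ)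
    (hr : 0 < r) (hm : ∃ h ∈ tauSubgroup 𝓑, r ≤ dist x (h x)) :
    ((fun g : X ≃ᵢ X => g '' ball x r) '' (tauSubgroup 𝓑 : Set (X ≃ᵢ X))).Infinite := by
  rcases hext (ball x r) ⟨r, hr, x, rfl⟩ with h | ⟨D, hD⟩
  · exact h
  · exfalso
    obtain ⟨h, hh, hle⟩ := hm
    have h1 : (1 : X ≃ᵢ X) '' ball x r ∈ orb 𝓑 (ball x r) :=
      ⟨1, (tauSubgroup 𝓑).one_mem, rfl⟩
    have h2 : h '' ball x r ∈ orb 𝓑 (ball x r) := ⟨h, hh, rfl⟩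
    rw [hD, Set.mem_singleton_iff] at h1 h2
    have h3 : h x ∈ (1 : X ≃ᵢ X) '' ball x r := by
      rw [h1, ← h2]
      exact ⟨x, mem_ball_self hr, rfl⟩
    have h4 : dist (h x) x < r := by simpa using h3
    rw [dist_comm] at h4
    linarith

end Displacement

end UltraGen

open UltraGen in
theorem exists_displacing_isometry_rel_FD_family
    {X : Type*} [MetricSpace X] [IsUltrametricDist X]
    (Z : Set X) (hZ : Z.Finite)
    (𝓑 : Set (Set X)) (h𝓑 : FDFamily 𝓑) (hext : ExtremalityProperty X 𝓑) :
    ∃ h ∈ tau (1 : X ≃ᵢ X) 𝓑,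
      (∀ x ∈ Z, ∀ x' ∈ Z, ∀ g g' : X ≃ᵢ X,
        PermutesSet g Z → PermutesSet g' Z → PermutesFam g 𝓑 → PermutesFam g' 𝓑 →
        tau g 𝓑 = tau g' 𝓑 →
        dist x (h x') = dist (g x) (h (g' x'))) ∧
      (∀ x ∈ Z, h x ∈ Z → h x = x) := by
  obtain ⟨f, hf, hd⟩ := exists_displacing (tauSubgroup 𝓑) hZ (orbit_infinite hext)
  have hmaps : ∀ B ∈ 𝓑, ∀ h ∈ tauSubgroup 𝓑, ∀ x ∈ B, h x ∈ B := by
    intro B hB h hh x hx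
    have := mem_tauSubgroup.1 hh B hB
    rw [← this]
    exact ⟨x, hx, rfl⟩
  have hfH : f ∈ tauSubgroup 𝓑 := by
    refine mem_tauSubgroup.2 fun B hB => ?_
    apply Set.Subset.antisymm
    · rintro _ ⟨x, hx, rfl⟩
      obtain ⟨h, hh, e⟩ := (hf x).1
      rw [e]
      exact hmaps B hB h hh x hx
    · intro x hx
      obtain ⟨h, hh, e⟩ := (hf x).2
      exact ⟨f⁻¹ x, by rw [e]; exact hmaps B hB h hh x hx, f.apply_inv_self x⟩
  refine ⟨f, hfH, ?_, ?_⟩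
  · intro x hx x' hx' g g' hgZ hgZ' hgB hgB' hτ
    have cg := compat_of_permutes hgZ hgB
    have cg' := compat_of_permutes hgZ' hgB'
    have hk : g⁻¹ * g' ∈ tauSubgroup 𝓑 := by
      refine mem_tauSubgroup.2 fun B hB => ?_
      have h1 : g' ∈ tau g 𝓑 := by rw [hτ]; exact fun _ _ => rfl
      have h2 : (g⁻¹ * g') '' B = (g⁻¹ : X ≃ᵢ X) '' (g' '' B) := by rw [Set.image_image]; rfl
      rw [h2, h1 B hB, Set.image_image]
      simp [IsometryEquiv.inv_apply_self]
    have hkg : ∀ y, g' y = g ((g⁻¹ * g') y) := fun y => by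
      simp [IsometryEquiv.mul_apply, IsometryEquiv.apply_inv_self]
    have hkZ : (g⁻¹ * g') x' ∈ Z := by
      rw [← cg.1, ← hkg, cg'.1]
      exact hx'
    have hle := disp_le_rad hZ hk hkZ
    rw [hd x hx x' hx', hd (g x) ((cg.1 x).2 hx) (g' x') ((cg'.1 x').2 hx'), cg'.rad_eq,
      hkg x', g.dist_eq]
    have h1 := um x x' ((g⁻¹ * g') x')
    have h2 := um x ((g⁻¹ * g') x') x'
    rw [dist_comm ((g⁻¹ * g') x') x'] at h2
    clear hd hf hmaps
    -- Moving the second point within distance `rad` of itself does not affect the maximum.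
    generalize (g⁻¹ * g') x' = y at *
    grind
  · intro x hx hfx
    have h1 := hd (f x) hfx x hx
    rw [dist_self] at h1
    have h2 : dist (f x) x ≤ 0 := h1 ▸ le_max_left _ _
    exact dist_le_zero.1 h2
end
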